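/- arXiv:2211.00370 — 2 statements merged into one kernel-verified Lean document; each statement's English description precedes it below -/
import Mathlib

section
/- For every z ∈ ℝⁿ and λ > 0, the standard bubble δ(z,λ)(x) = 2^{(n-2σ)/2} (Γ((n+2σ)/2)/Γ((n-2σ)/2))^{(n-2σ)/(4σ)} (λ/(λ² + |x-z|²))^{(n-2σ)/2} is a positive solution of the fractional equation (−Δ)^σ u = u^{(n+2σ)/(n−2σ)} on ℝⁿ. -/
open MeasureTheory Real Filter

noncomputable section

abbrev Ex (n : ℕ) := EuclideanSpace ℝ (Fin n)
abbrev Fx (n : ℕ) := Ex n × ℝ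

/-- Euclidean length of a point of the (closed) upper half space `ℝⁿ × ℝ`. -/
def pnorm {n : ℕ} (p : Fx n) : ℝ := Real.sqrt (‖p.1‖ ^ 2 + p.2 ^ 2)

/-- Squared Euclidean length of the full gradient `|∇U|²` of `U : ℝ^{n+1} → ℝ`. -/
def gradSq {n : ℕ} (U : Fx n → ℝ) (p : Fx n) : ℝ :=
  (∑ i : Fin n, (fderiv ℝ U p (EuclideanSpace.single i 1, (0:ℝ))) ^ 2)
    + (fderiv ℝ U p ((0 : Ex n), (1:ℝ))) ^ 2

/-- Inner product `∇U · ∇V` of the full gradients. -/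
def gradInner {n : ℕ} (U V : Fx n → ℝ) (p : Fx n) : ℝ :=
  (∑ i : Fin n, (fderiv ℝ U p (EuclideanSpace.single i 1, (0:ℝ)))
      * (fderiv ℝ V p (EuclideanSpace.single i 1, (0:ℝ))))
    + (fderiv ℝ U p ((0 : Ex n), (1:ℝ))) * (fderiv ℝ V p ((0 : Ex n), (1:ℝ)))

/-- The open upper half space `ℝ^{n+1}_+`. -/
def halfSpace (n : ℕ) : Set (Fx n) := {p | 0 < p.2}

/-- The weighted Dirichlet energy `∫_{ℝ^{n+1}_+} t^{1-2σ} |∇U|²`. -/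
def energy (n : ℕ) (σ : ℝ) (U : Fx n → ℝ) : ℝ :=
  ∫ p in halfSpace n, p.2 ^ (1 - 2*σ) * gradSq U p

/-- `N_σ = 2^{1-2σ} Γ(1-σ)/Γ(σ)`. -/
def Nconst (σ : ℝ) : ℝ := (2:ℝ) ^ (1 - 2*σ) * Real.Gamma (1 - σ) / Real.Gamma σ

/-- The critical exponent `2*_σ = 2n/(n-2σ)`. -/
def qc (n : ℕ) (σ : ℝ) : ℝ := 2 * n / (n - 2*σ)

/-- `H(x) = (2/(1+|x|²))^{(n-2σ)/2}`. -/
def Hfun (n : ℕ) (σ : ℝ) (x : Ex n) : ℝ := (2 / (1 + ‖x‖^2)) ^ (((n:ℝ) - 2*σ)/2)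

/-- The energy functional `I_K`. -/
def IK (n : ℕ) (σ : ℝ) (K : Ex n → ℝ) (U : Fx n → ℝ) : ℝ :=
  (1/2) * energy n σ U - (Nconst σ / qc n σ) * ∫ x : Ex n, K x * |U (x, 0)| ^ qc n σ

/-- The subcritical energy functional `I_{K,τ}`. -/
def IKt (n : ℕ) (σ τ : ℝ) (K : Ex n → ℝ) (U : Fx n → ℝ) : ℝ :=
  (1/2) * energy n σ U
    - (Nconst σ / (qc n σ - τ)) * ∫ x : Ex n, K x * Hfun n σ x ^ τ * |U (x, 0)| ^ (qc n σ - τ)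

/-- The standard bubble `δ(z,λ)`. -/
def bubble (n : ℕ) (σ : ℝ) (z : Ex n) (lam : ℝ) (x : Ex n) : ℝ :=
  (2:ℝ) ^ (((n:ℝ) - 2*σ)/2)
    * (Real.Gamma (((n:ℝ) + 2*σ)/2) / Real.Gamma (((n:ℝ) - 2*σ)/2)) ^ (((n:ℝ) - 2*σ)/(4*σ))
    * (lam / (lam^2 + ‖x - z‖^2)) ^ (((n:ℝ) - 2*σ)/2)

/-- Fractional Laplacian via the principal-value singular integral. -/
def fracLap (n : ℕ) (σ : ℝ) (u : Ex n → ℝ) (x : Ex n) : ℝ :=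
  ((2:ℝ) ^ (2*σ) * σ * Real.Gamma (((n:ℝ) + 2*σ)/2)
      / (Real.pi ^ ((n:ℝ)/2) * Real.Gamma (1 - σ))) *
    limUnder (nhdsWithin (0:ℝ) (Set.Ioi 0))
      (fun ε => ∫ y in {y : Ex n | ε < dist x y}, (u x - u y) / dist x y ^ ((n:ℝ) + 2*σ))

/-- Pointwise divergence-form operator `div(t^{1-2σ} ∇U)`. -/
def divForm (n : ℕ) (σ : ℝ) (U : Fx n → ℝ) (p : Fx n) : ℝ :=
  (∑ i : Fin n, fderiv ℝ
      (fun q : Fx n => q.2 ^ (1 - 2*σ) * fderiv ℝ U q (EuclideanSpace.single i 1, (0:ℝ)))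
      p (EuclideanSpace.single i 1, (0:ℝ)))
    + fderiv ℝ (fun q : Fx n => q.2 ^ (1 - 2*σ) * fderiv ℝ U q ((0:Ex n), (1:ℝ)))
        p ((0:Ex n), (1:ℝ))

/-- The weighted Neumann derivative `∂_ν^σ U = -N_σ⁻¹ lim_{t→0⁺} t^{1-2σ} ∂_t U`. -/
def pnuD (n : ℕ) (σ : ℝ) (U : Fx n → ℝ) (x : Ex n) : ℝ :=
  -(Nconst σ)⁻¹ * limUnder (nhdsWithin (0:ℝ) (Set.Ioi 0))
      (fun t => t ^ (1 - 2*σ) * fderiv ℝ U (x, t) ((0:Ex n), (1:ℝ)))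

/-- The canonical σ-harmonic extension with normalizing constant `β`. -/
def Pext (n : ℕ) (σ β : ℝ) (u : Ex n → ℝ) (p : Fx n) : ℝ :=
  if p.2 = 0 then u p.1
  else β * ∫ ξ : Ex n, p.2 ^ (2*σ) / (‖p.1 - ξ‖^2 + p.2^2) ^ (((n:ℝ) + 2*σ)/2) * u ξ

/-- Smooth compactly supported functions: a dense subclass of `D`. -/
def smoothCpt (n : ℕ) (U : Fx n → ℝ) : Prop := ContDiff ℝ (⊤ : ℕ∞) U ∧ HasCompactSupport U

/-- `L^{2*_σ}` norm of the trace. -/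
def traceNorm (n : ℕ) (σ : ℝ) (U : Fx n → ℝ) : ℝ :=
  (∫ x : Ex n, |U (x, 0)| ^ qc n σ) ^ (qc n σ)⁻¹

/-- The sharp trace constant `𝒮_{n,σ}`. -/
def sharpTrace (n : ℕ) (σ : ℝ) : ℝ :=
  sSup {c : ℝ | 0 ≤ c ∧ ∀ U : Fx n → ℝ, smoothCpt n U →
    c * traceNorm n σ U ≤ Real.sqrt (energy n σ U)}

/-- The sharp fractional Sobolev constant `S_{n,σ} = N_σ^{1/2} 𝒮_{n,σ}`. -/
def Sc (n : ℕ) (σ : ℝ) : ℝ := Real.sqrt (Nconst σ) * sharpTrace n σ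

open Topology Module EuclideanGeometry

/-!
The integrand of `p.v. ∫ (u x - u (x + h)) / |h|^{n + 2σ} dh` may be replaced by its even part in
`h`. Put `s = (n - 2σ) / 2`. The inversion `h = w / |w|²` takes a bubble of exponent `s` to
`|w|^{2s}` times another bubble, and `s + σ = n / 2` is exactly what makes the Jacobian and the
kernel combine with this factor to
`u x * (|w|^{-2s} - ((|w - b|² + c)^{-s} + (|w + b|² + c)^{-s}) / 2)`,
where `c = (λ / (λ² + |x - z|²))²` and `b = (x - z) / (λ² + |x - z|²)`.

Write each power as a superposition of Gaussians, `Γ(s) r^{-s} = ∫ τ^{s-1} e^{-rτ} dτ`, and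
integrate in `w` first: all Gaussians of a given width have the same mass, so `b` disappears and
`π^{n/2} ∫ τ^{-σ-1} (1 - e^{-cτ}) dτ = π^{n/2} Γ(1 - σ) / σ * c^σ` remains. To have a fixed sign for
Tonelli's theorem, insert `(|w|² + |b|² + c)^{-s}`: it lies below `|w|^{-2s}`, and its Gaussians lie
below the average of the two shifted ones by the parallelogram law and the convexity of `exp`.
Finally `c^σ` times the bubble is a constant multiple of its power `(n + 2σ) / (n - 2σ)`, and the
normalizing constant absorbs the factor.
-/

section HasIntegral

variable {α β F : Type*} [MeasurableSpace α] [MeasurableSpace β] [NormedAddCommGroup F]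
  [NormedSpace ℝ F] {μ : Measure α} {ν : Measure β}

/-- `f` is Bochner integrable with integral `I`. Bundling the two keeps the junk value `0` of the
integral of a non-integrable function out of the computations. -/
def HasIntegral (f : α → F) (I : F) (μ : Measure α) : Prop :=
  Integrable f μ ∧ ∫ x, f x ∂μ = I

namespace HasIntegral

variable {f g : α → F} {I J : F}

lemma congr (hf : HasIntegral f I μ) (h : f =ᵐ[μ] g) : HasIntegral g I μ :=
  ⟨hf.1.congr h, (integral_congr_ae h).symm.trans hf.2⟩

lemma add (hf : HasIntegral f I μ) (hg : HasIntegral g J μ) :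
    HasIntegral (fun x => f x + g x) (I + J) μ :=
  ⟨hf.1.add hg.1, by rw [integral_add hf.1 hg.1, hf.2, hg.2]⟩

lemma sub (hf : HasIntegral f I μ) (hg : HasIntegral g J μ) :
    HasIntegral (fun x => f x - g x) (I - J) μ :=
  ⟨hf.1.sub hg.1, by rw [integral_sub hf.1 hg.1, hf.2, hg.2]⟩

lemma const_mul {f : α → ℝ} {I : ℝ} (hf : HasIntegral f I μ) (c : ℝ) :
    HasIntegral (fun x => c * f x) (c * I) μ :=
  ⟨hf.1.const_mul c, by rw [integral_const_mul, hf.2]⟩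

lemma div_const {f : α → ℝ} {I : ℝ} (hf : HasIntegral f I μ) (c : ℝ) :
    HasIntegral (fun x => f x / c) (I / c) μ :=
  ⟨hf.1.div_const c, by rw [integral_div, hf.2]⟩

lemma of_iterated_nonneg [SFinite μ] [SFinite ν] {K : α → β → ℝ} {m : α → ℝ} {G : β → ℝ} {I : ℝ}
    (hK : AEStronglyMeasurable K.uncurry (μ.prod ν)) (hpos : ∀ᵐ a ∂μ, ∀ᵐ b ∂ν, 0 ≤ K a b)
    (hleft : ∀ᵐ a ∂μ, HasIntegral (K a) (m a) ν) (hright : ∀ᵐ b ∂ν, ∫ a, K a b ∂μ = G b)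
    (hm : HasIntegral m I μ) : HasIntegral G I ν := by
  have hnorm : m =ᵐ[μ] fun a => ∫ b, ‖K.uncurry (a, b)‖ ∂ν := by
    filter_upwards [hleft, hpos] with a ha hpos
    rw [← ha.2]
    exact integral_congr_ae (hpos.mono fun b hb => (Real.norm_of_nonneg hb).symm)
  have hint : Integrable K.uncurry (μ.prod ν) :=
    (integrable_prod_iff hK).2 ⟨hleft.mono fun _ h => h.1, hm.1.congr hnorm⟩
  refine ⟨hint.integral_prod_right.congr hright, ?_⟩
  rw [← integral_congr_ae hright, ← integral_integral_swap hint,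
    integral_congr_ae (hleft.mono fun _ h => h.2), hm.2]

end HasIntegral

end HasIntegral

section GammaIntegrals

variable {s σ c : ℝ}

lemma hasIntegral_rpow_mul_exp_neg_mul_Ioi (hs : 0 < s) (hc : 0 < c) :
    HasIntegral (fun t : ℝ => t ^ (s - 1) * exp (-(c * t))) (Gamma s * c ^ (-s))
      (volume.restrict (Set.Ioi 0)) := by
  have hint := integrableOn_rpow_mul_exp_neg_mul_rpow (s := s - 1) (by linarith) one_pos hc
  simp only [rpow_one, neg_mul] at hint
  refine ⟨hint, ?_⟩
  rw [integral_rpow_mul_exp_neg_mul_Ioi hs hc, one_div, inv_rpow hc.le, rpow_neg hc.le, mul_comm]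

lemma one_sub_exp_neg_mem_Icc {x : ℝ} (hx : 0 ≤ x) : 1 - exp (-x) ∈ Set.Icc 0 (min 1 x) := by
  have hle : exp (-x) ≤ 1 := exp_le_one_iff.2 (neg_nonpos.2 hx)
  have hge : -x + 1 ≤ exp (-x) := add_one_le_exp (-x)
  exact ⟨by linarith, le_min (by linarith [exp_pos (-x)]) (by linarith)⟩

lemma integrableOn_rpow_mul_one_sub_exp_neg_mul_Ioi (hσ0 : 0 < σ) (hσ1 : σ < 1) (hc : 0 ≤ c) :
    IntegrableOn (fun t : ℝ => t ^ (-σ - 1) * (1 - exp (-(c * t)))) (Set.Ioi 0) := by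
  have hmeas : Measurable fun t : ℝ => t ^ (-σ - 1) * (1 - exp (-(c * t))) := by fun_prop
  have hbound (t : ℝ) (ht : 0 < t) : ‖t ^ (-σ - 1) * (1 - exp (-(c * t)))‖
      ≤ t ^ (-σ - 1) * min 1 (c * t) := by
    obtain ⟨h0, h1⟩ := one_sub_exp_neg_mem_Icc (mul_nonneg hc ht.le)
    rw [Real.norm_of_nonneg (by positivity)]
    gcongr
  rw [← Set.Ioc_union_Ioi_eq_Ioi zero_le_one]
  refine IntegrableOn.union ?_ ?_
  · have hpow : IntegrableOn (fun t : ℝ => c * t ^ (-σ)) (Set.Ioc 0 1) :=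
      ((intervalIntegrable_iff_integrableOn_Ioc_of_le zero_le_one).1
        (intervalIntegral.intervalIntegrable_rpow' (by linarith))).const_mul c
    refine hpow.mono' hmeas.aestronglyMeasurable ?_
    filter_upwards [ae_restrict_mem measurableSet_Ioc] with t ht
    calc _ ≤ t ^ (-σ - 1) * (c * t) :=
          (hbound t ht.1).trans (by gcongr; exacts [rpow_nonneg ht.1.le _, min_le_right _ _])
      _ = c * (t ^ (-σ - 1) * t) := by ring
      _ = c * t ^ (-σ) := by rw [← rpow_add_one ht.1.ne', sub_add_cancel]
  · refine (integrableOn_Ioi_rpow_of_lt (a := -σ - 1) (by linarith) one_pos).mono'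
      hmeas.aestronglyMeasurable ?_
    filter_upwards [ae_restrict_mem measurableSet_Ioi] with t (ht : 1 < t)
    have ht0 : 0 < t := one_pos.trans ht
    exact (hbound t ht0).trans (mul_le_of_le_one_right (by positivity) (min_le_left _ _))

lemma tendsto_one_sub_exp_neg_mul_mul_rpow_neg_nhdsGT_zero (hσ1 : σ < 1) (hc : 0 ≤ c) :
    Tendsto (fun t : ℝ => (1 - exp (-(c * t))) * t ^ (-σ)) (𝓝[>] 0) (𝓝 0) := by
  have hpow : Tendsto (fun t : ℝ => c * t ^ (1 - σ)) (𝓝[>] 0) (𝓝 0) := by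
    have h := (continuousAt_rpow_const 0 (1 - σ) (.inr (by linarith))).tendsto.const_mul c
    rw [zero_rpow (by linarith), mul_zero] at h
    exact h.mono_left nhdsWithin_le_nhds
  refine squeeze_zero' ?_ ?_ hpow <;>
    filter_upwards [self_mem_nhdsWithin] with t (ht : 0 < t) <;>
    obtain ⟨h0, h1⟩ := one_sub_exp_neg_mem_Icc (mul_nonneg hc ht.le)
  · positivity
  · calc _ ≤ (c * t) * t ^ (-σ) := by gcongr; exact h1.trans (min_le_right _ _)
      _ = c * t ^ (1 - σ) := by rw [sub_eq_neg_add, rpow_add_one ht.ne']; ring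

lemma tendsto_one_sub_exp_neg_mul_mul_rpow_neg_atTop (hσ0 : 0 < σ) (hc : 0 ≤ c) :
    Tendsto (fun t : ℝ => (1 - exp (-(c * t))) * t ^ (-σ)) atTop (𝓝 0) := by
  refine squeeze_zero' ?_ ?_ (tendsto_rpow_neg_atTop hσ0) <;>
    filter_upwards [eventually_gt_atTop 0] with t ht <;>
    obtain ⟨h0, h1⟩ := one_sub_exp_neg_mem_Icc (mul_nonneg hc ht.le)
  · positivity
  · exact mul_le_of_le_one_left (by positivity) (h1.trans (min_le_left _ _))

lemma hasIntegral_rpow_mul_one_sub_exp_neg_mul_Ioi (hσ0 : 0 < σ) (hσ1 : σ < 1) (hc : 0 < c) :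
    HasIntegral (fun t : ℝ => t ^ (-σ - 1) * (1 - exp (-(c * t)))) (Gamma (1 - σ) / σ * c ^ σ)
      (volume.restrict (Set.Ioi 0)) := by
  have hint := integrableOn_rpow_mul_one_sub_exp_neg_mul_Ioi hσ0 hσ1 hc.le
  obtain ⟨hint', hval⟩ := hasIntegral_rpow_mul_exp_neg_mul_Ioi (s := 1 - σ) (by linarith) hc
  simp only [sub_sub_cancel_left, neg_sub] at hint' hval
  have hderiv_one_sub_exp (t : ℝ) :
      HasDerivAt (fun t => 1 - exp (-(c * t))) (c * exp (-(c * t))) t := by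
    simpa [mul_comm] using (((hasDerivAt_id t).const_mul c).neg.exp).const_sub 1
  have hderiv_rpow (t : ℝ) (ht : t ∈ Set.Ioi 0) :
      HasDerivAt (fun t => -σ⁻¹ * t ^ (-σ)) (t ^ (-σ - 1)) t := by
    convert! (hasDerivAt_rpow_const (p := -σ) (.inl ht.ne')).const_mul (-σ⁻¹) using 1
    field_simp
  have hparts := integral_Ioi_mul_deriv_eq_deriv_mul (a := 0) (a' := -σ⁻¹ * 0) (b' := -σ⁻¹ * 0)
    (fun t _ => hderiv_one_sub_exp t) hderiv_rpow
    (hint.congr_fun (fun t _ => mul_comm _ _) measurableSet_Ioi)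
    ((hint'.const_mul (-σ⁻¹ * c)).congr (.of_forall fun t => by simp only [Pi.mul_apply]; ring))
    ((tendsto_one_sub_exp_neg_mul_mul_rpow_neg_nhdsGT_zero hσ1 hc.le).const_mul (-σ⁻¹) |>.congr
      fun t => by simp only [Pi.mul_apply]; ring)
    ((tendsto_one_sub_exp_neg_mul_mul_rpow_neg_atTop hσ0 hc.le).const_mul (-σ⁻¹) |>.congr
      fun t => by simp only [Pi.mul_apply]; ring)
  refine ⟨hint, ?_⟩
  calc ∫ t in Set.Ioi (0 : ℝ), t ^ (-σ - 1) * (1 - exp (-(c * t)))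
      = ∫ t in Set.Ioi (0 : ℝ), (1 - exp (-(c * t))) * t ^ (-σ - 1) := by simp only [mul_comm]
    _ = -∫ t in Set.Ioi (0 : ℝ), c * exp (-(c * t)) * (-σ⁻¹ * t ^ (-σ)) := by
      rw [hparts, sub_self, zero_sub]
    _ = σ⁻¹ * c * ∫ t in Set.Ioi (0 : ℝ), t ^ (-σ) * exp (-(c * t)) := by
      rw [← integral_neg, ← integral_const_mul]
      exact integral_congr_ae (.of_forall fun t => by ring)
    _ = Gamma (1 - σ) / σ * c ^ σ := by
      rw [hval, rpow_sub_one hc.ne']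
      field_simp

end GammaIntegrals

section Subordination

variable {E : Type*} [NormedAddCommGroup E] {s σ c τ : ℝ} {b w : E}

/-- The integrand in `Γ(s) (‖w - b‖² + c)⁻ˢ = ∫₀^∞ τ^{s-1} e^{-(‖w - b‖² + c)τ} dτ`, which writes a
power of a quadratic polynomial as a superposition of Gaussians. -/
def gammaKernel (s c : ℝ) (b : E) (τ : ℝ) (w : E) : ℝ :=
  τ ^ (s - 1) * exp (-((‖w - b‖ ^ 2 + c) * τ))

lemma hasIntegral_gammaKernel_Ioi (hs : 0 < s) (hw : 0 < ‖w - b‖ ^ 2 + c) :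
    HasIntegral (fun τ => gammaKernel s c b τ w) (Gamma s * (‖w - b‖ ^ 2 + c) ^ (-s))
      (volume.restrict (Set.Ioi 0)) :=
  hasIntegral_rpow_mul_exp_neg_mul_Ioi hs hw

lemma gammaKernel_le_gammaKernel_zero (hτ : 0 ≤ τ) (hc : 0 ≤ c) :
    gammaKernel s c b τ w ≤ gammaKernel s 0 b τ w := by
  unfold gammaKernel
  gcongr

lemma measurable_uncurry_gammaKernel [MeasurableSpace E] [BorelSpace E] (s c : ℝ)
    (b : E) : Measurable (Function.uncurry (gammaKernel s c b)) := by
  unfold gammaKernel Function.uncurry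
  fun_prop

variable [InnerProductSpace ℝ E]

lemma gammaKernel_zero_le_average (hτ : 0 ≤ τ) :
    gammaKernel s (‖b‖ ^ 2 + c) 0 τ w
      ≤ (gammaKernel s c b τ w + gammaKernel s c (-b) τ w) / 2 := by
  have hmid : -((‖w - 0‖ ^ 2 + (‖b‖ ^ 2 + c)) * τ) = (1 / 2 : ℝ) • -((‖w - b‖ ^ 2 + c) * τ)
      + (1 / 2 : ℝ) • -((‖w - -b‖ ^ 2 + c) * τ) := by
    rw [sub_zero, sub_neg_eq_add, smul_eq_mul, smul_eq_mul]
    linear_combination τ / 2 * parallelogram_law_with_norm ℝ w b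
  have hconvex := convexOn_exp.2 (Set.mem_univ (-((‖w - b‖ ^ 2 + c) * τ)))
    (Set.mem_univ (-((‖w - -b‖ ^ 2 + c) * τ)))
    one_half_pos.le one_half_pos.le (add_halves 1)
  rw [← hmid, smul_eq_mul, smul_eq_mul] at hconvex
  unfold gammaKernel
  linarith [mul_le_mul_of_nonneg_left hconvex (rpow_nonneg hτ (s - 1))]

variable [FiniteDimensional ℝ E] [MeasurableSpace E] [BorelSpace E]

lemma hasIntegral_exp_neg_mul_norm_sub_sq (hτ : 0 < τ) (b : E) :
    HasIntegral (fun w : E => exp (-(τ * ‖w - b‖ ^ 2))) ((π / τ) ^ (finrank ℝ E / 2 : ℝ))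
      volume := by
  have hval : ∫ w : E, exp (-(τ * ‖w‖ ^ 2)) = (π / τ) ^ (finrank ℝ E / 2 : ℝ) := by
    simpa only [neg_mul] using GaussianFourier.integral_rexp_neg_mul_sq_norm (V := E) hτ
  have hint : Integrable fun w : E => exp (-(τ * ‖w‖ ^ 2)) :=
    .of_integral_ne_zero (by rw [hval]; positivity)
  exact ⟨hint.comp_sub_right b, (integral_sub_right_eq_self _ b).trans hval⟩

lemma hasIntegral_gammaKernel (hsσ : s + σ = finrank ℝ E / 2) (hτ : 0 < τ) :
    HasIntegral (gammaKernel s c b τ)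
      (π ^ (finrank ℝ E / 2 : ℝ) * (τ ^ (-σ - 1) * exp (-(c * τ)))) volume := by
  have hpow : τ ^ (s - 1) * (π / τ) ^ (finrank ℝ E / 2 : ℝ)
      = π ^ (finrank ℝ E / 2 : ℝ) * τ ^ (-σ - 1) := by
    rw [div_rpow pi_pos.le hτ.le, show -σ - 1 = s - 1 - finrank ℝ E / 2 by linarith,
      rpow_sub hτ (s - 1) (finrank ℝ E / 2)]
    ring
  have h := (hasIntegral_exp_neg_mul_norm_sub_sq hτ b).const_mul (τ ^ (s - 1) * exp (-(c * τ)))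
  rw [mul_right_comm, hpow, mul_assoc] at h
  refine h.congr (.of_forall fun w => ?_)
  simp only [gammaKernel]
  rw [mul_assoc, ← exp_add]
  ring_nf

lemma hasIntegral_Gamma_mul_norm_sq_rpow_sub [Nontrivial E] (hs : 0 < s) (hσ0 : 0 < σ)
    (hσ1 : σ < 1) (hsσ : s + σ = finrank ℝ E / 2) (hc : 0 < c) :
    HasIntegral (fun w : E => Gamma s * (‖w‖ ^ 2) ^ (-s) - Gamma s * (‖w‖ ^ 2 + c) ^ (-s))
      (π ^ (finrank ℝ E / 2 : ℝ) * (Gamma (1 - σ) / σ * c ^ σ)) volume := by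
  refine HasIntegral.of_iterated_nonneg
    (K := fun τ w => gammaKernel s 0 0 τ w - gammaKernel s c 0 τ w)
    ((measurable_uncurry_gammaKernel s 0 0).sub
      (measurable_uncurry_gammaKernel s c 0)).aestronglyMeasurable
    ?_ ?_ ?_ ((hasIntegral_rpow_mul_one_sub_exp_neg_mul_Ioi hσ0 hσ1 hc).const_mul _)
  · filter_upwards [ae_restrict_mem measurableSet_Ioi] with τ (hτ : 0 < τ)
    exact .of_forall fun w => sub_nonneg.2 (gammaKernel_le_gammaKernel_zero hτ.le hc.le)
  · filter_upwards [ae_restrict_mem measurableSet_Ioi] with τ (hτ : 0 < τ)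
    convert! (hasIntegral_gammaKernel (c := 0) (b := 0) hsσ hτ).sub
      (hasIntegral_gammaKernel (c := c) (b := 0) hsσ hτ) using 1
    simp only [zero_mul, neg_zero, exp_zero]
    ring
  · filter_upwards [compl_mem_ae_iff.2 (measure_singleton (0 : E))] with w (hw : w ≠ 0)
    have h0 : 0 < ‖w - 0‖ ^ 2 + 0 := by
      rw [sub_zero, add_zero]
      exact pow_pos (norm_pos_iff.2 hw) 2
    have hc' : 0 < ‖w - 0‖ ^ 2 + c := by positivity
    simpa only [sub_zero, add_zero] using
      ((hasIntegral_gammaKernel_Ioi hs h0).sub (hasIntegral_gammaKernel_Ioi hs hc')).2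

lemma hasIntegral_Gamma_mul_average_sub (hs : 0 < s) (hσ0 : 0 < σ) (hσ1 : σ < 1)
    (hsσ : s + σ = finrank ℝ E / 2) (hc : 0 < c) (b : E) :
    HasIntegral (fun w : E => (Gamma s * (‖w - b‖ ^ 2 + c) ^ (-s)
        + Gamma s * (‖w + b‖ ^ 2 + c) ^ (-s)) / 2 - Gamma s * (‖w‖ ^ 2 + (‖b‖ ^ 2 + c)) ^ (-s))
      (π ^ (finrank ℝ E / 2 : ℝ)
        * (Gamma (1 - σ) / σ * (‖b‖ ^ 2 + c) ^ σ - Gamma (1 - σ) / σ * c ^ σ)) volume := by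
  have hbc : 0 < ‖b‖ ^ 2 + c := by positivity
  refine HasIntegral.of_iterated_nonneg
    (K := fun τ w => (gammaKernel s c b τ w + gammaKernel s c (-b) τ w) / 2
      - gammaKernel s (‖b‖ ^ 2 + c) 0 τ w)
    ((((measurable_uncurry_gammaKernel s c b).add
      (measurable_uncurry_gammaKernel s c (-b))).div_const 2).sub
      (measurable_uncurry_gammaKernel s (‖b‖ ^ 2 + c) 0)).aestronglyMeasurable
    ?_ ?_ ?_ (((hasIntegral_rpow_mul_one_sub_exp_neg_mul_Ioi hσ0 hσ1 hbc).sub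
      (hasIntegral_rpow_mul_one_sub_exp_neg_mul_Ioi hσ0 hσ1 hc)).const_mul _)
  · filter_upwards [ae_restrict_mem measurableSet_Ioi] with τ (hτ : 0 < τ)
    exact .of_forall fun w => sub_nonneg.2 (gammaKernel_zero_le_average hτ.le)
  · filter_upwards [ae_restrict_mem measurableSet_Ioi] with τ (hτ : 0 < τ)
    convert! (((hasIntegral_gammaKernel (c := c) (b := b) hsσ hτ).add
      (hasIntegral_gammaKernel (c := c) (b := -b) hsσ hτ)).div_const 2).sub
      (hasIntegral_gammaKernel (c := ‖b‖ ^ 2 + c) (b := 0) hsσ hτ) using 1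
    ring
  · refine .of_forall fun w => ?_
    have hb : 0 < ‖w - b‖ ^ 2 + c := by positivity
    have hneg : 0 < ‖w - -b‖ ^ 2 + c := by positivity
    have h0 : 0 < ‖w - 0‖ ^ 2 + (‖b‖ ^ 2 + c) := by positivity
    simpa only [sub_neg_eq_add, sub_zero] using
      ((((hasIntegral_gammaKernel_Ioi hs hb).add (hasIntegral_gammaKernel_Ioi hs hneg)).div_const
        2).sub (hasIntegral_gammaKernel_Ioi hs h0)).2

lemma hasIntegral_norm_sq_rpow_sub_average [Nontrivial E] (hs : 0 < s) (hσ0 : 0 < σ)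
    (hσ1 : σ < 1) (hsσ : s + σ = finrank ℝ E / 2) (hc : 0 < c) (b : E) :
    HasIntegral (fun w : E => (‖w‖ ^ 2) ^ (-s)
        - ((‖w - b‖ ^ 2 + c) ^ (-s) + (‖w + b‖ ^ 2 + c) ^ (-s)) / 2)
      (π ^ (finrank ℝ E / 2 : ℝ) * Gamma (1 - σ) / (Gamma s * σ) * c ^ σ) volume := by
  have hΓ : Gamma s ≠ 0 := (Gamma_pos_of_pos hs).ne'
  have h := ((hasIntegral_Gamma_mul_norm_sq_rpow_sub hs hσ0 hσ1 hsσ (c := ‖b‖ ^ 2 + c)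
    (by positivity)).sub (hasIntegral_Gamma_mul_average_sub hs hσ0 hσ1 hsσ hc b)).const_mul
    (Gamma s)⁻¹
  convert! h using 1
  · ext w
    field_simp
    ring
  · field_simp
    ring

end Subordination

section Inversion

variable {E F : Type*} [NormedAddCommGroup E] [InnerProductSpace ℝ E] [FiniteDimensional ℝ E]
  [NormedAddCommGroup F] [NormedSpace ℝ F]

lemma abs_det_smul_reflection (r : ℝ) (K : Submodule ℝ E) :
    |(r • (K.reflection : E →L[ℝ] E)).det| = |r| ^ finrank ℝ E := by
  have hdet : |LinearMap.det ((K.reflection : E →L[ℝ] E) : E →ₗ[ℝ] E)| = 1 :=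
    (congrArg abs K.det_reflection).trans (by simp)
  rw [ContinuousLinearMap.det, ContinuousLinearMap.toLinearMap_smul, LinearMap.det_smul, abs_mul,
    hdet, mul_one, abs_pow]

lemma hasIntegral_comp_inversion_iff [Nontrivial E] [MeasurableSpace E] [BorelSpace E]
    (μ : Measure E) [μ.IsAddHaarMeasure] (c : E) {R : ℝ} (hR : R ≠ 0) {g : E → F} {I : F} :
    HasIntegral (fun x => (R / dist x c) ^ (2 * finrank ℝ E) • g (inversion c R x)) I μ ↔
      HasIntegral g I μ := by
  have hderiv (x : E) (hx : x ∈ ({c}ᶜ : Set E)) :=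
    (hasFDerivAt_inversion (R := R) hx).hasFDerivWithinAt (s := {c}ᶜ)
  have hinj : Set.InjOn (inversion c R) {c}ᶜ := (inversion_injective c hR).injOn
  have himage : inversion c R '' {c}ᶜ = {c}ᶜ := by
    rw [Set.image_compl_eq (inversion_bijective c hR), Set.image_singleton, inversion_self]
  have hmeas : MeasurableSet ({c}ᶜ : Set E) := (measurableSet_singleton c).compl
  have hint := integrableOn_image_iff_integrableOn_abs_det_fderiv_smul μ hmeas hderiv hinj g
  have hval := integral_image_eq_integral_abs_det_fderiv_smul μ hmeas hderiv hinj g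
  simp only [himage, abs_det_smul_reflection, IntegrableOn, restrict_compl_singleton,
    abs_sq, ← pow_mul] at hint hval
  rw [HasIntegral, HasIntegral, hint, hval]

end Inversion

section PrincipalValue

lemma setIntegral_eq_setIntegral_average_neg {G : Type*} [MeasurableSpace G] [InvolutiveNeg G]
    [MeasurableNeg G] {μ : Measure G} [μ.IsNegInvariant] {A : Set G} (hA : -A = A) {f : G → ℝ}
    (hf : IntegrableOn f A μ) : ∫ h in A, f h ∂μ = ∫ h in A, (f h + f (-h)) / 2 ∂μ := by
  have hpres : MeasurePreserving Neg.neg (μ.restrict A) (μ.restrict A) := by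
    simpa only [Set.neg_preimage, hA] using
      (Measure.measurePreserving_neg μ).restrict_preimage_emb
        (MeasurableEquiv.neg G).measurableEmbedding A
  have hneg : ∫ h in A, f (-h) ∂μ = ∫ h in A, f h ∂μ :=
    hpres.integral_comp (MeasurableEquiv.neg G).measurableEmbedding f
  have hint : IntegrableOn (fun h => f (-h)) A μ :=
    (hpres.integrable_comp_emb (MeasurableEquiv.neg G).measurableEmbedding).2 hf
  rw [integral_div, integral_add hf hint, hneg]
  ring

variable {E : Type*} [NormedAddCommGroup E] [MeasurableSpace E] {μ : Measure E}
  {p : ℝ} {u : E → ℝ} {x : E}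

/-- `p.v. ∫ (u x - u y) / |x - y|^p dy = L`: the truncated integrals converge to `L` as the radius
of the removed ball tends to `0`. -/
def HasPrincipalValue (p : ℝ) (u : E → ℝ) (x : E) (L : ℝ) (μ : Measure E) : Prop :=
  Tendsto (fun ε => ∫ y in {y : E | ε < dist x y}, (u x - u y) / dist x y ^ p ∂μ) (𝓝[>] 0) (𝓝 L)

/-- The even part in `h` of the integrand `(u x - u (x + h)) / |h|^p` of the principal value. -/
def symmQuotient (p : ℝ) (u : E → ℝ) (x h : E) : ℝ :=
  (u x - (u (x + h) + u (x - h)) / 2) / ‖h‖ ^ p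

lemma HasPrincipalValue.const_mul {L : ℝ} (h : HasPrincipalValue p u x L μ) (C : ℝ) :
    HasPrincipalValue p (fun y => C * u y) x (C * L) μ := by
  refine (Tendsto.const_mul C h).congr fun ε => ?_
  rw [← integral_const_mul]
  simp only [← mul_sub, mul_div_assoc]

lemma HasPrincipalValue.fracLap_eq {n : ℕ} {σ L : ℝ} {u : Ex n → ℝ} {x : Ex n}
    (h : HasPrincipalValue (n + 2 * σ) u x L volume) :
    fracLap n σ u x = 2 ^ (2 * σ) * σ * Gamma ((n + 2 * σ) / 2)
      / (π ^ (n / 2 : ℝ) * Gamma (1 - σ)) * L := by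
  rw [fracLap, h.limUnder_eq]

variable [BorelSpace E]

lemma aecover_lt_norm [NullSingletonClass μ] :
    AECover μ (𝓝[>] 0) fun ε : ℝ => {h : E | ε < ‖h‖} where
  ae_eventually_mem := by
    filter_upwards [compl_mem_ae_iff.2 (measure_singleton (0 : E))] with h hh
    exact nhdsWithin_le_nhds (Iio_mem_nhds (norm_pos_iff.2 hh))
  measurableSet _ := measurableSet_lt measurable_const measurable_norm

lemma setIntegral_lt_dist_eq_setIntegral_lt_norm [μ.IsAddLeftInvariant] (ε : ℝ) :
    ∫ y in {y : E | ε < dist x y}, (u x - u y) / dist x y ^ p ∂μ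
      = ∫ h in {h : E | ε < ‖h‖}, (u x - u (x + h)) / ‖h‖ ^ p ∂μ := by
  have hpre : (x + ·) ⁻¹' {y : E | ε < dist x y} = {h : E | ε < ‖h‖} := by
    ext h
    simp
  have h := (measurePreserving_add_left μ x).setIntegral_preimage_emb
    (MeasurableEquiv.addLeft x).measurableEmbedding
    (fun y => (u x - u y) / dist x y ^ p) {y : E | ε < dist x y}
  simpa only [hpre, dist_self_add_right] using h.symm

variable [NormedSpace ℝ E] [FiniteDimensional ℝ E] [μ.IsAddHaarMeasure]

lemma integrableOn_div_norm_rpow (hp : finrank ℝ E < p) {f : E → ℝ} (hf : Measurable f) {M : ℝ}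
    (hM : ∀ h, |f h| ≤ M) {ε : ℝ} (hε : 0 < ε) :
    IntegrableOn (fun h => f h / ‖h‖ ^ p) {h | ε < ‖h‖} μ := by
  have hp0 : 0 ≤ p := (Nat.cast_nonneg _).trans hp.le
  have hM0 : 0 ≤ M := (abs_nonneg _).trans (hM 0)
  have hjapanese : Integrable (fun h : E => M * (1 + 1 / ε) ^ p * (1 + ‖h‖) ^ (-p)) μ :=
    (integrable_one_add_norm hp).const_mul _
  refine hjapanese.integrableOn.mono'
    (hf.div (measurable_norm.pow_const p)).aestronglyMeasurable ?_
  filter_upwards [ae_restrict_mem (measurableSet_lt measurable_const measurable_norm)] with h hh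
  have hh0 : 0 < ‖h‖ := hε.trans hh
  have hle : 1 + ‖h‖ ≤ (1 + 1 / ε) * ‖h‖ := by
    have : 1 ≤ ‖h‖ / ε := (one_le_div hε).2 (le_of_lt hh)
    linear_combination this
  rw [norm_div, Real.norm_eq_abs, Real.norm_of_nonneg (by positivity : 0 ≤ ‖h‖ ^ p),
    rpow_neg (by positivity), ← div_eq_mul_inv, div_le_div_iff₀ (by positivity) (by positivity)]
  calc |f h| * (1 + ‖h‖) ^ p ≤ M * ((1 + 1 / ε) * ‖h‖) ^ p := by gcongr; exact hM h
    _ = M * (1 + 1 / ε) ^ p * ‖h‖ ^ p := by rw [mul_rpow (by positivity) hh0.le, mul_assoc]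

lemma setIntegral_lt_dist_eq_setIntegral_symmQuotient (hp : finrank ℝ E < p) (hu : Measurable u)
    {M : ℝ} (hM : ∀ y, |u y| ≤ M) (x : E) {ε : ℝ} (hε : 0 < ε) :
    ∫ y in {y : E | ε < dist x y}, (u x - u y) / dist x y ^ p ∂μ
      = ∫ h in {h : E | ε < ‖h‖}, symmQuotient p u x h ∂μ := by
  have hbound (h : E) : |u x - u (x + h)| ≤ M + M :=
    (abs_sub _ _).trans (add_le_add (hM x) (hM (x + h)))
  have hint : IntegrableOn (fun h => (u x - u (x + h)) / ‖h‖ ^ p) {h | ε < ‖h‖} μ :=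
    integrableOn_div_norm_rpow hp (by fun_prop) hbound hε
  rw [setIntegral_lt_dist_eq_setIntegral_lt_norm,
    setIntegral_eq_setIntegral_average_neg (by ext h; simp) hint]
  refine integral_congr_ae (.of_forall fun h => ?_)
  simp only [symmQuotient, norm_neg, ← sub_eq_add_neg]
  ring

lemma hasPrincipalValue_of_hasIntegral_symmQuotient [Nontrivial E] (hp : finrank ℝ E < p)
    (hu : Measurable u) {M : ℝ} (hM : ∀ y, |u y| ≤ M) {L : ℝ}
    (hS : HasIntegral (symmQuotient p u x) L μ) : HasPrincipalValue p u x L μ := by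
  rw [← hS.2]
  refine (aecover_lt_norm.integral_tendsto_of_countably_generated hS.1).congr' ?_
  filter_upwards [self_mem_nhdsWithin] with ε hε
  exact (setIntegral_lt_dist_eq_setIntegral_symmQuotient hp hu hM x hε).symm

end PrincipalValue

section Bubble

variable {E : Type*} [NormedAddCommGroup E] {s σ lam A : ℝ} {z x w : E}

/-- The bubble without its normalizing constant, in any normed space and with a free exponent `s` in
place of `(n - 2σ) / 2`. -/
def bubbleProfile (s lam : ℝ) (z x : E) : ℝ :=
  (lam / (lam ^ 2 + ‖x - z‖ ^ 2)) ^ s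

lemma bubbleProfile_pos (hlam : 0 < lam) : 0 < bubbleProfile s lam z x := by
  unfold bubbleProfile
  positivity

lemma bubbleProfile_le (hs : 0 ≤ s) (hlam : 0 < lam) :
    bubbleProfile s lam z x ≤ (lam / lam ^ 2) ^ s := by
  unfold bubbleProfile
  gcongr
  exact le_add_of_nonneg_right (sq_nonneg _)

lemma measurable_bubbleProfile [MeasurableSpace E] [BorelSpace E] :
    Measurable (bubbleProfile s lam z) := by
  unfold bubbleProfile
  fun_prop

lemma bubbleProfile_mul_rpow (hs : s ≠ 0) (hlam : 0 < lam) :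
    bubbleProfile s lam z x * ((lam / (lam ^ 2 + ‖x - z‖ ^ 2)) ^ 2) ^ σ
      = bubbleProfile s lam z x ^ ((s + 2 * σ) / s) := by
  have ht : 0 < lam / (lam ^ 2 + ‖x - z‖ ^ 2) := by positivity
  rw [bubbleProfile, ← rpow_natCast_mul ht.le, ← rpow_mul ht.le, ← rpow_add ht,
    mul_div_cancel₀ _ hs, Nat.cast_ofNat]

variable [InnerProductSpace ℝ E]

lemma sq_add_norm_add_inv_smul_sq {a : ℝ} {q : E} (hA : A = a ^ 2 + ‖q‖ ^ 2) (hA0 : A ≠ 0)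
    (hw : w ≠ 0) :
    a ^ 2 + ‖q + (‖w‖ ^ 2)⁻¹ • w‖ ^ 2
      = A / ‖w‖ ^ 2 * (‖w + A⁻¹ • q‖ ^ 2 + (a / A) ^ 2) := by
  have hw0 : ‖w‖ ≠ 0 := norm_ne_zero_iff.2 hw
  simp only [norm_add_sq_real, inner_smul_right, norm_smul, mul_pow, Real.norm_eq_abs, sq_abs,
    real_inner_comm w q]
  rw [show ‖q‖ ^ 2 = A - a ^ 2 by rw [hA]; ring]
  field_simp
  ring

lemma inversion_zero_one (w : E) : inversion 0 1 w = (‖w‖ ^ 2)⁻¹ • w := by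
  simp [inversion]

lemma bubbleProfile_add_inversion (hlam : 0 < lam) (hA : A = lam ^ 2 + ‖x - z‖ ^ 2) (hw : w ≠ 0) :
    bubbleProfile s lam z (x + inversion 0 1 w) = bubbleProfile s lam z x
      * ((‖w‖ ^ 2) ^ s * (‖w + A⁻¹ • (x - z)‖ ^ 2 + (lam / A) ^ 2) ^ (-s)) := by
  have hA0 : 0 < A := hA ▸ by positivity
  obtain ⟨D, hD⟩ : ∃ D, D = ‖w + A⁻¹ • (x - z)‖ ^ 2 + (lam / A) ^ 2 := ⟨_, rfl⟩
  have hD0 : 0 < D := hD ▸ by positivity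
  rw [bubbleProfile, bubbleProfile, add_sub_right_comm, inversion_zero_one,
    sq_add_norm_add_inv_smul_sq hA hA0.ne' hw, ← hA, ← hD, rpow_neg hD0.le, ← inv_rpow hD0.le,
    ← mul_rpow (by positivity) (by positivity), ← mul_rpow (by positivity) (by positivity)]
  congr 1
  field_simp

lemma one_div_norm_pow_div_rpow_inversion (hsσ : s + σ = finrank ℝ E / 2) (hw : w ≠ 0) :
    (1 / dist w 0) ^ (2 * finrank ℝ E) / ‖inversion 0 1 w‖ ^ (finrank ℝ E + 2 * σ)
      = (‖w‖ ^ 2) ^ (-s) := by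
  have hw0 : 0 < ‖w‖ := norm_pos_iff.2 hw
  have hnorm : ‖inversion 0 1 w‖ = ‖w‖⁻¹ := by
    rw [inversion_zero_one, norm_smul, norm_inv, norm_pow, norm_norm]
    field_simp
  rw [hnorm, dist_zero_right, one_div, ← rpow_natCast, ← rpow_sub (by positivity),
    inv_rpow hw0.le, ← rpow_neg hw0.le, ← rpow_natCast, ← rpow_mul hw0.le]
  congr 1
  push_cast
  linarith

lemma jacobian_mul_symmQuotient_bubbleProfile_inversion (hlam : 0 < lam)
    (hsσ : s + σ = finrank ℝ E / 2) (hA : A = lam ^ 2 + ‖x - z‖ ^ 2) (hw : w ≠ 0) :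
    (1 / dist w 0) ^ (2 * finrank ℝ E)
        * symmQuotient (finrank ℝ E + 2 * σ) (bubbleProfile s lam z) x (inversion 0 1 w)
      = bubbleProfile s lam z x * ((‖w‖ ^ 2) ^ (-s)
        - ((‖w - A⁻¹ • (x - z)‖ ^ 2 + (lam / A) ^ 2) ^ (-s)
          + (‖w + A⁻¹ • (x - z)‖ ^ 2 + (lam / A) ^ 2) ^ (-s)) / 2) := by
  have hcancel : (‖w‖ ^ 2) ^ (-s) * (‖w‖ ^ 2) ^ s = 1 := by
    rw [← rpow_add (by positivity), neg_add_cancel, rpow_zero]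
  have hinv_neg : -inversion 0 1 w = inversion 0 1 (-w) := by
    simp only [inversion_zero_one, norm_neg, smul_neg]
  rw [symmQuotient, sub_eq_add_neg x, hinv_neg, bubbleProfile_add_inversion hlam hA hw,
    bubbleProfile_add_inversion hlam hA (neg_ne_zero.2 hw), mul_div_left_comm,
    one_div_norm_pow_div_rpow_inversion hsσ hw, norm_neg, neg_add_eq_sub w, norm_sub_rev _ w]
  linear_combination (-bubbleProfile s lam z x
    * ((‖w - A⁻¹ • (x - z)‖ ^ 2 + (lam / A) ^ 2) ^ (-s)
      + (‖w + A⁻¹ • (x - z)‖ ^ 2 + (lam / A) ^ 2) ^ (-s)) / 2) * hcancel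

variable [FiniteDimensional ℝ E] [MeasurableSpace E] [BorelSpace E] [Nontrivial E]

lemma hasIntegral_symmQuotient_bubbleProfile (hs : 0 < s) (hσ0 : 0 < σ) (hσ1 : σ < 1)
    (hsσ : s + σ = finrank ℝ E / 2) (hlam : 0 < lam) (z x : E) :
    HasIntegral (symmQuotient (finrank ℝ E + 2 * σ) (bubbleProfile s lam z) x)
      (bubbleProfile s lam z x * (π ^ (finrank ℝ E / 2 : ℝ) * Gamma (1 - σ) / (Gamma s * σ)
        * ((lam / (lam ^ 2 + ‖x - z‖ ^ 2)) ^ 2) ^ σ)) volume := by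
  rw [← hasIntegral_comp_inversion_iff volume 0 one_ne_zero]
  refine ((hasIntegral_norm_sq_rpow_sub_average hs hσ0 hσ1 hsσ (by positivity)
    ((lam ^ 2 + ‖x - z‖ ^ 2)⁻¹ • (x - z))).const_mul (bubbleProfile s lam z x)).congr ?_
  filter_upwards [compl_mem_ae_iff.2 (measure_singleton (0 : E))] with w hw
  exact (jacobian_mul_symmQuotient_bubbleProfile_inversion hlam hsσ rfl hw).symm

theorem hasPrincipalValue_bubbleProfile (hs : 0 < s) (hσ0 : 0 < σ) (hσ1 : σ < 1)
    (hsσ : s + σ = finrank ℝ E / 2) (hlam : 0 < lam) (z x : E) :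
    HasPrincipalValue (finrank ℝ E + 2 * σ) (bubbleProfile s lam z) x
      (π ^ (finrank ℝ E / 2 : ℝ) * Gamma (1 - σ) / (Gamma s * σ)
        * bubbleProfile s lam z x ^ ((s + 2 * σ) / s)) volume := by
  have hS := hasIntegral_symmQuotient_bubbleProfile hs hσ0 hσ1 hsσ hlam z x
  rw [mul_left_comm, bubbleProfile_mul_rpow hs.ne' hlam] at hS
  refine hasPrincipalValue_of_hasIntegral_symmQuotient (by linarith) measurable_bubbleProfile
    (M := (lam / lam ^ 2) ^ s) (fun y => ?_) hS
  rw [abs_of_pos (bubbleProfile_pos hlam)]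
  exact bubbleProfile_le hs.le hlam

end Bubble

section Normalization

variable {n : ℕ} {σ : ℝ}

/-- The normalizing constant of the bubble, so that `δ(z,λ) = bubbleConst n σ * bubbleProfile …`. -/
def bubbleConst (n : ℕ) (σ : ℝ) : ℝ :=
  2 ^ ((n - 2 * σ) / 2) * (Gamma ((n + 2 * σ) / 2) / Gamma ((n - 2 * σ) / 2))
    ^ ((n - 2 * σ) / (4 * σ))

lemma bubble_eq_bubbleConst_mul_bubbleProfile (z : Ex n) (lam : ℝ) :
    bubble n σ z lam = fun x => bubbleConst n σ * bubbleProfile ((n - 2 * σ) / 2) lam z x :=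
  rfl

lemma bubbleConst_pos (hσ0 : 0 < σ) (hσn : 2 * σ < n) : 0 < bubbleConst n σ := by
  have h₁ : 0 < Gamma ((n + 2 * σ) / 2) := Gamma_pos_of_pos (by linarith)
  have h₂ : 0 < Gamma ((n - 2 * σ) / 2) := Gamma_pos_of_pos (by linarith)
  exact mul_pos (rpow_pos_of_pos two_pos _) (rpow_pos_of_pos (div_pos h₁ h₂) _)

lemma bubbleConst_rpow (hσ0 : 0 < σ) (hσn : 2 * σ < n) :
    bubbleConst n σ ^ ((n + 2 * σ) / (n - 2 * σ)) = bubbleConst n σ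
      * (2 ^ (2 * σ) * (Gamma ((n + 2 * σ) / 2) / Gamma ((n - 2 * σ) / 2))) := by
  have hpos : 0 < n - 2 * σ := by linarith
  have hΓ : 0 < Gamma ((n + 2 * σ) / 2) / Gamma ((n - 2 * σ) / 2) :=
    div_pos (Gamma_pos_of_pos (by linarith)) (Gamma_pos_of_pos (by linarith))
  have hexp : (n + 2 * σ) / (n - 2 * σ) = 1 + 4 * σ / (n - 2 * σ) := by
    field_simp
    ring
  have htwo : (n - 2 * σ) / 2 * (4 * σ / (n - 2 * σ)) = 2 * σ := by
    field_simp
    ring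
  have hone : (n - 2 * σ) / (4 * σ) * (4 * σ / (n - 2 * σ)) = 1 := by field_simp
  rw [hexp, rpow_add (bubbleConst_pos hσ0 hσn), rpow_one]
  congr 1
  rw [bubbleConst, mul_rpow (by positivity) (by positivity), ← rpow_mul two_pos.le, htwo,
    ← rpow_mul hΓ.le, hone, rpow_one]

lemma bubble_pos (hσ0 : 0 < σ) (hσn : 2 * σ < n) {z x : Ex n} {lam : ℝ} (hlam : 0 < lam) :
    0 < bubble n σ z lam x :=
  mul_pos (bubbleConst_pos hσ0 hσn) (bubbleProfile_pos hlam)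

end Normalization

theorem bubble_solves_fractional_equation_general (n : ℕ) (σ : ℝ)
    (hσ0 : 0 < σ) (hσ1 : σ < 1) (hσn : 2 * σ < n) (z : Ex n) (lam : ℝ) (hlam : 0 < lam) :
    (∀ x : Ex n, 0 < bubble n σ z lam x) ∧
    (∀ x : Ex n, fracLap n σ (bubble n σ z lam) x
      = bubble n σ z lam x ^ (((n:ℝ) + 2*σ) / ((n:ℝ) - 2*σ))) := by
  refine ⟨fun x => bubble_pos hσ0 hσn hlam, fun x => ?_⟩
  obtain ⟨s, hs⟩ : ∃ s : ℝ, s = (n - 2 * σ) / 2 := ⟨_, rfl⟩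
  have hs0 : 0 < s := by linarith
  have : Nonempty (Fin n) := Fin.pos_iff_nonempty.1 (by exact_mod_cast (by linarith : (0 : ℝ) < n))
  have hpv := (hasPrincipalValue_bubbleProfile (E := Ex n) hs0 hσ0 hσ1
    (by rw [finrank_euclideanSpace_fin, hs]; ring) hlam z x).const_mul (bubbleConst n σ)
  rw [finrank_euclideanSpace_fin] at hpv
  have hexp : (s + 2 * σ) / s = (n + 2 * σ) / (n - 2 * σ) := by
    rw [hs]
    field_simp
    ring
  have hΓσ : 0 < Gamma (1 - σ) := Gamma_pos_of_pos (by linarith)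
  rw [bubble_eq_bubbleConst_mul_bubbleProfile, ← hs, hpv.fracLap_eq, hexp,
    mul_rpow (bubbleConst_pos hσ0 hσn).le (bubbleProfile_pos hlam).le, bubbleConst_rpow hσ0 hσn,
    ← hs]
  field_simp

/-- The standard bubble is a positive solution of `(-Δ)^σ u = u^{(n+2σ)/(n-2σ)}` on `ℝⁿ`. -/
theorem bubble_solves_fractional_equation (n : ℕ) (σ : ℝ)
    (hn : 2 ≤ n) (hσ0 : 0 < σ) (hσ1 : σ < 1) (z : Ex n) (lam : ℝ) (hlam : 0 < lam) :
    (∀ x : Ex n, 0 < bubble n σ z lam x) ∧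
    (∀ x : Ex n, fracLap n σ (bubble n σ z lam) x
      = bubble n σ z lam x ^ (((n:ℝ) + 2*σ) / ((n:ℝ) - 2*σ))) := by
  have hn' : (2 : ℝ) ≤ n := by exact_mod_cast hn
  exact bubble_solves_fractional_equation_general n σ hσ0 hσ1 (by linarith) z lam hlam
end
end

section
/- Trace inequality on exterior domains uniformly in the centers: let z₁, z₂ ∈ ℝⁿ with |z₁ − z₂| ≥ 10 and Ω = ℝ^{n+1}_+ \ (B₁⁺(z₁) ∪ B₁⁺(z₂)). There exists C = C(n,σ), independent of z₁, z₂, such that for all U ∈ D_Ω, (∫_{∂'Ω} |U(x,0)|^{2n/(n−2σ)} dx)^{(n−2σ)/(2n)} ≤ C (∫_Ω t^{1−2σ}|∇U|² dX)^{1/2}. -/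
open MeasureTheory Real Filter

noncomputable section

/-- The exterior domain `Ω = ℝ^{n+1}_+ \ (B₁⁺(z₁) ∪ B₁⁺(z₂))`. -/
def extOmega (n : ℕ) (z₁ z₂ : Ex n) : Set (Fx n) :=
  {p | 0 < p.2 ∧ 1 ≤ pnorm (p.1 - z₁, p.2) ∧ 1 ≤ pnorm (p.1 - z₂, p.2)}

/-- The flat boundary portion `∂'Ω ⊂ ℝⁿ`. -/
def extFlat (n : ℕ) (z₁ z₂ : Ex n) : Set (Ex n) :=
  {x | 1 < ‖x - z₁‖ ∧ 1 < ‖x - z₂‖}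

/-!
Every point `x` of the flat boundary outside both unit balls is the vertex of an infinite cone
inside `Ω`, of an opening that does not depend on the centers: lean it away from the nearer center.
Integrating `∇U` along the rays of this cone and averaging bounds `|U(x, 0)|` by the integral of
`|∇U| 1_Ω` over the full cone above `x` against `t ^ (-n) dy dt`. That cone integral is estimated as
in Hedberg's proof of the Sobolev inequality. By Cauchy–Schwarz its part below height `R` is at most
`R ^ σ` times the square root of the local energy `S(x)`, and its part above `R` is at most
`R ^ (σ - n / 2)` times the square root of the total energy `E`. Optimising in `R` bounds its power
`q = 2n / (n - 2σ)` by a multiple of `S(x) E ^ (q / 2 - 1)`, and `∫ S` is a multiple of `E`.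
-/

open scoped ENNReal NNReal
open Metric Set

section Interpolation

variable {a s e : ℝ≥0} {α β : ℝ}

lemma le_two_mul_rpow_mul_rpow_of_pos (hs : 0 < s) (he : 0 < e) (hα : 0 < α) (hβ : 0 < β)
    (h : ∀ R : ℝ≥0, 0 < R → a ≤ s * R ^ α + e * R ^ (-β)) :
    a ≤ 2 * (s ^ (β / (α + β)) * e ^ (α / (α + β))) := by
  set R := (e / s) ^ (α + β)⁻¹ with hR
  have hR0 : 0 < R := by positivity
  have h_near : s * R ^ α = s ^ (β / (α + β)) * e ^ (α / (α + β)) := by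
    have hexp : β / (α + β) = 1 - α / (α + β) := by field_simp; ring
    rw [hR, ← NNReal.rpow_mul, inv_mul_eq_div, NNReal.div_rpow, hexp, NNReal.rpow_sub hs.ne',
      NNReal.rpow_one]
    field_simp
  have h_far : e * R ^ (-β) = s * R ^ α := by
    have hRpow : R ^ α * R ^ β = e / s := by
      rw [← NNReal.rpow_add hR0.ne', hR, NNReal.rpow_inv_rpow (by positivity)]
    rw [NNReal.rpow_neg, ← div_eq_mul_inv, div_eq_iff (by positivity), mul_assoc, hRpow]
    field_simp
  calc a ≤ s * R ^ α + e * R ^ (-β) := h R hR0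
    _ = 2 * (s ^ (β / (α + β)) * e ^ (α / (α + β))) := by rw [h_far, h_near, two_mul]

lemma le_two_mul_rpow_mul_rpow (hα : 0 < α) (hβ : 0 < β)
    (h : ∀ R : ℝ≥0, 0 < R → a ≤ s * R ^ α + e * R ^ (-β)) :
    a ≤ 2 * (s ^ (β / (α + β)) * e ^ (α / (α + β))) := by
  have h_perturbed : ∀ ε : ℝ≥0, 0 < ε →
      a ≤ 2 * ((s + ε) ^ (β / (α + β)) * (e + ε) ^ (α / (α + β))) := fun ε hε ↦
    le_two_mul_rpow_mul_rpow_of_pos (by positivity) (by positivity) hα hβ fun R hR ↦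
      (h R hR).trans (by gcongr <;> exact le_self_add)
  have h_cont : Continuous fun ε : ℝ≥0 ↦
      2 * ((s + ε) ^ (β / (α + β)) * (e + ε) ^ (α / (α + β))) := by
    have : 0 ≤ β / (α + β) := by positivity
    have : 0 ≤ α / (α + β) := by positivity
    fun_prop (disch := assumption)
  have h_lim := (h_cont.tendsto 0).mono_left (nhdsWithin_le_nhds (s := Ioi 0))
  simp only [add_zero] at h_lim
  exact ge_of_tendsto h_lim (eventually_mem_nhdsWithin.mono h_perturbed)

lemma ennreal_le_two_mul_rpow_mul_rpow {a s e : ℝ≥0∞} (hs : s ≠ ∞) (he : e ≠ ∞)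
    (hα : 0 < α) (hβ : 0 < β)
    (h : ∀ R : ℝ≥0, 0 < R → a ≤ s * (R : ℝ≥0∞) ^ α + e * (R : ℝ≥0∞) ^ (-β)) :
    a ≤ 2 * (s ^ (β / (α + β)) * e ^ (α / (α + β))) := by
  lift s to ℝ≥0 using hs
  lift e to ℝ≥0 using he
  have ha : a ≠ ∞ := ne_top_of_le_ne_top (by simp) (h 1 one_pos)
  lift a to ℝ≥0 using ha
  have h' : ∀ R : ℝ≥0, 0 < R → a ≤ s * R ^ α + e * R ^ (-β) := fun R hR ↦ by
    simpa only [← ENNReal.coe_rpow_of_ne_zero hR.ne', ← ENNReal.coe_mul, ← ENNReal.coe_add,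
      ENNReal.coe_le_coe] using h R hR
  rw [← ENNReal.coe_rpow_of_nonneg _ (by positivity),
    ← ENNReal.coe_rpow_of_nonneg _ (by positivity)]
  exact_mod_cast le_two_mul_rpow_mul_rpow hα hβ h'

end Interpolation

section PowerIntegrals

lemma lintegral_Ioc_rpow {b R : ℝ} (hb : 0 < b) (hR : 0 < R) :
    ∫⁻ t in Ioc 0 R, ENNReal.ofReal (t ^ (b - 1)) = ENNReal.ofReal (R ^ b / b) := by
  rw [← ofReal_integral_eq_lintegral_ofReal, ← intervalIntegral.integral_of_le hR.le,
    integral_rpow (Or.inl (by linarith)), sub_add_cancel, Real.zero_rpow hb.ne', sub_zero]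
  · exact (intervalIntegrable_iff_integrableOn_Ioc_of_le hR.le).1
      (intervalIntegral.intervalIntegrable_rpow' (by linarith))
  · filter_upwards [ae_restrict_mem measurableSet_Ioc] with t ht
    exact Real.rpow_nonneg ht.1.le _

lemma lintegral_Ioi_rpow {b R : ℝ} (hb : 0 < b) (hR : 0 < R) :
    ∫⁻ t in Ioi R, ENNReal.ofReal (t ^ (-b - 1)) = ENNReal.ofReal (R ^ (-b) / b) := by
  rw [← ofReal_integral_eq_lintegral_ofReal, integral_Ioi_rpow_of_lt (by linarith) hR,
    sub_add_cancel, neg_div_neg_eq]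
  · exact integrableOn_Ioi_rpow_of_lt (by linarith) hR
  · filter_upwards [ae_restrict_mem measurableSet_Ioi] with t ht
    exact Real.rpow_nonneg (hR.trans ht).le _

end PowerIntegrals

lemma setLIntegral_prod_comp_snd {X Y : Type*} [MeasurableSpace X] [MeasurableSpace Y]
    (μ : Measure X) (ν : Measure Y) [SFinite μ] [SFinite ν] (s : Set X) (T : Set Y)
    {f : Y → ℝ≥0∞} (hf : Measurable f) :
    ∫⁻ z in s ×ˢ T, f z.2 ∂μ.prod ν = μ s * ∫⁻ t in T, f t ∂ν := by
  rw [← Measure.prod_restrict, ← lintegral_map hf measurable_snd,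
    Measure.map_snd_prod, lintegral_smul_measure, Measure.restrict_apply_univ, smul_eq_mul]

section WeightedEnergy

/-- The weighted energy density `t ^ (1 - 2σ) g²`, where `g` plays the role of `|∇U|`. -/
def energyDensity {E : Type*} (σ : ℝ) (g : E × ℝ → ℝ≥0∞) (p : E × ℝ) : ℝ≥0∞ :=
  ENNReal.ofReal (p.2 ^ (1 - 2 * σ)) * g p ^ 2

variable {E : Type*} [MeasurableSpace E] {σ : ℝ} {g : E × ℝ → ℝ≥0∞}

/-- The weighted energy `∫ t ^ (1 - 2σ) g²` over the half space `{t > 0}`. -/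
def halfSpaceEnergy (μ : Measure E) (σ : ℝ) (g : E × ℝ → ℝ≥0∞) : ℝ≥0∞ :=
  ∫⁻ p in univ ×ˢ Ioi 0, energyDensity σ g p ∂μ.prod volume

lemma measurable_energyDensity (hg : Measurable g) : Measurable (energyDensity σ g) := by
  unfold energyDensity
  fun_prop

lemma halfSpaceEnergy_indicator_le {μ : Measure E} {Ω : Set (E × ℝ)} (hΩ : MeasurableSet Ω)
    (g : E × ℝ → ℝ≥0∞) :
    halfSpaceEnergy μ σ (Ω.indicator g) ≤ ∫⁻ p in Ω, energyDensity σ g p ∂μ.prod volume := by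
  rw [← lintegral_indicator hΩ]
  refine (setLIntegral_le_lintegral _ _).trans_eq (lintegral_congr fun p ↦ ?_)
  by_cases hp : p ∈ Ω <;> simp [energyDensity, hp]

end WeightedEnergy

section ConeIntegral

variable {E : Type*} [NormedAddCommGroup E] [NormedSpace ℝ E] [MeasurableSpace E]
  {μ : Measure E} {T : Set ℝ} {f g : E × ℝ → ℝ≥0∞} {σ : ℝ}

/-- The integral of `f` over the part at heights `T` of the cone `{(x + t • v, t) | ‖v‖ < 1}` with
vertex `(x, 0)`, taken with respect to the parameters `(v, t)`: in terms of the point `(y, t)` of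
the cone, the measure is `t ^ (-dim E) dy dt`. -/
def coneIntegral (μ : Measure E) (T : Set ℝ) (f : E × ℝ → ℝ≥0∞) (x : E) : ℝ≥0∞ :=
  ∫⁻ z in ball (0 : E) 1 ×ˢ T, f (x + z.2 • z.1, z.2) ∂μ.prod volume

lemma coneIntegral_mono_set {T' : Set ℝ} (h : T ⊆ T') (x : E) :
    coneIntegral μ T f x ≤ coneIntegral μ T' f x :=
  lintegral_mono_set (prod_mono_right h)

lemma coneIntegral_union_le (T' : Set ℝ) (x : E) :
    coneIntegral μ (T ∪ T') f x ≤ coneIntegral μ T f x + coneIntegral μ T' f x := by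
  unfold coneIntegral
  rw [prod_union]
  exact lintegral_union_le _ _ _

variable [BorelSpace E] [FiniteDimensional ℝ E] [μ.IsAddHaarMeasure]

lemma measurable_coneIntegral (hf : Measurable f) : Measurable (coneIntegral μ T f) :=
  Measurable.lintegral_prod_right'
    (f := fun q : E × E × ℝ ↦ f (q.1 + q.2.2 • q.2.1, q.2.2)) (by fun_prop)

/-- Fubini: for fixed `(v, t)`, translation by `t • v` preserves `μ`. -/
lemma lintegral_coneIntegral (hf : Measurable f) :
    ∫⁻ x, coneIntegral μ T f x ∂μ
      = μ (ball 0 1) * ∫⁻ p in univ ×ˢ T, f p ∂μ.prod volume := by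
  have h_meas : Measurable fun t : ℝ ↦ ∫⁻ y, f (y, t) ∂μ := hf.lintegral_prod_left'
  calc ∫⁻ x, coneIntegral μ T f x ∂μ
      = ∫⁻ z in ball (0 : E) 1 ×ˢ T, ∫⁻ y, f (y + z.2 • z.1, z.2) ∂μ ∂μ.prod volume :=
        lintegral_lintegral_swap (by fun_prop)
    _ = ∫⁻ z in ball (0 : E) 1 ×ˢ T, ∫⁻ y, f (y, z.2) ∂μ ∂μ.prod volume :=
        lintegral_congr fun z ↦ lintegral_add_right_eq_self (fun y ↦ f (y, z.2)) _
    _ = μ (ball 0 1) * ∫⁻ t in T, ∫⁻ y, f (y, t) ∂μ :=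
        setLIntegral_prod_comp_snd μ volume _ _ h_meas
    _ = μ (ball 0 1) * ∫⁻ p in univ ×ˢ T, f p ∂μ.prod volume := by
        rw [setLIntegral_prod_symm _ hf.aemeasurable, Measure.restrict_univ]

lemma lintegral_comp_add_smul (hf : Measurable f) (x : E) {t : ℝ} (ht : 0 < t) :
    ∫⁻ v, f (x + t • v, t) ∂μ
      = ENNReal.ofReal (t ^ Module.finrank ℝ E)⁻¹ * ∫⁻ y, f (y, t) ∂μ := by
  calc ∫⁻ v, f (x + t • v, t) ∂μ
      = ∫⁻ y, f (x + y, t) ∂(μ.map (t • ·)) := by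
        rw [lintegral_map (by fun_prop) (by fun_prop)]
    _ = ENNReal.ofReal (t ^ Module.finrank ℝ E)⁻¹ * ∫⁻ y, f (x + y, t) ∂μ := by
        rw [Measure.map_addHaar_smul μ ht.ne', lintegral_smul_measure, smul_eq_mul,
          abs_of_pos (by positivity)]
    _ = ENNReal.ofReal (t ^ Module.finrank ℝ E)⁻¹ * ∫⁻ y, f (y, t) ∂μ := by
        rw [lintegral_add_left_eq_self (fun y ↦ f (y, t)) x]

lemma coneIntegral_rpow_finrank_mul_le (hf : Measurable f) (hTm : MeasurableSet T)
    (hT : T ⊆ Ioi 0) (x : E) :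
    coneIntegral μ T (fun p ↦ ENNReal.ofReal (p.2 ^ Module.finrank ℝ E) * f p) x
      ≤ ∫⁻ p in univ ×ˢ T, f p ∂μ.prod volume := by
  unfold coneIntegral
  rw [setLIntegral_prod_symm _ (by fun_prop), setLIntegral_prod_symm _ hf.aemeasurable]
  refine setLIntegral_mono' hTm fun t ht ↦ ?_
  have ht0 : 0 < t := hT ht
  calc ∫⁻ v in ball 0 1, ENNReal.ofReal (t ^ Module.finrank ℝ E) * f (x + t • v, t) ∂μ
      ≤ ∫⁻ v, ENNReal.ofReal (t ^ Module.finrank ℝ E) * f (x + t • v, t) ∂μ :=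
        setLIntegral_le_lintegral _ _
    _ = ∫⁻ y, f (y, t) ∂μ := by
        rw [lintegral_const_mul _ (by fun_prop), lintegral_comp_add_smul hf x ht0, ← mul_assoc,
          ← ENNReal.ofReal_mul (by positivity), mul_inv_cancel₀ (by positivity),
          ENNReal.ofReal_one, one_mul]
    _ = ∫⁻ y in univ, f (y, t) ∂μ := by rw [Measure.restrict_univ]

/-- Cauchy–Schwarz, with the splitting `g = (t ^ a g²) ^ (1/2) * (t ^ (-a)) ^ (1/2)`. -/
lemma coneIntegral_le_rpow_mul_rpow (hg : Measurable g) (hTm : MeasurableSet T)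
    (hT : T ⊆ Ioi 0) (a : ℝ) (x : E) :
    coneIntegral μ T g x
      ≤ coneIntegral μ T (fun p ↦ ENNReal.ofReal (p.2 ^ a) * g p ^ 2) x ^ (1 / 2 : ℝ)
        * (μ (ball 0 1) * ∫⁻ t in T, ENNReal.ofReal (t ^ (-a))) ^ (1 / 2 : ℝ) := by
  have h_weight : ∫⁻ z in ball (0 : E) 1 ×ˢ T, ENNReal.ofReal (z.2 ^ (-a)) ∂μ.prod volume
      = μ (ball 0 1) * ∫⁻ t in T, ENNReal.ofReal (t ^ (-a)) :=
    setLIntegral_prod_comp_snd μ volume _ _ (f := fun t ↦ ENNReal.ofReal (t ^ (-a))) (by fun_prop)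
  have h_split : ∀ t : ℝ, 0 < t → ∀ c : ℝ≥0∞, c =
      (ENNReal.ofReal (t ^ a) * c ^ 2) ^ (1 / 2 : ℝ) * ENNReal.ofReal (t ^ (-a)) ^ (1 / 2 : ℝ) := by
    intro t ht c
    rw [← ENNReal.mul_rpow_of_nonneg _ _ (by norm_num), mul_right_comm,
      ← ENNReal.ofReal_mul (by positivity), ← Real.rpow_add ht, add_neg_cancel, Real.rpow_zero,
      ENNReal.ofReal_one, one_mul, ← ENNReal.rpow_natCast_mul]
    norm_num
  have h_holder := ENNReal.lintegral_mul_le_Lp_mul_Lq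
    ((μ.prod volume).restrict (ball (0 : E) 1 ×ˢ T)) Real.HolderConjugate.two_two
    (f := fun z ↦ (ENNReal.ofReal (z.2 ^ a) * g (x + z.2 • z.1, z.2) ^ 2) ^ (1 / 2 : ℝ))
    (g := fun z ↦ ENNReal.ofReal (z.2 ^ (-a)) ^ (1 / 2 : ℝ)) (by fun_prop) (by fun_prop)
  simp only [Pi.mul_apply, one_div, ENNReal.rpow_inv_rpow two_ne_zero, h_weight] at h_holder
  simp only [one_div] at h_split ⊢
  calc coneIntegral μ T g x
      = _ := setLIntegral_congr_fun (measurableSet_ball.prod hTm) fun z hz ↦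
        h_split z.2 (hT hz.2) (g (x + z.2 • z.1, z.2))
    _ ≤ _ := h_holder

lemma rpow_half_mul_ofReal_rpow_div (V : ℝ≥0∞) {b c : ℝ} (hb : 0 < b) {R : ℝ≥0} (hR : 0 < R) :
    (V * ENNReal.ofReal ((R : ℝ) ^ (2 * c) / b)) ^ (1 / 2 : ℝ)
      = (V / ENNReal.ofReal b) ^ (1 / 2 : ℝ) * (R : ℝ≥0∞) ^ c := by
  rw [ENNReal.ofReal_div_of_pos hb, ← ENNReal.ofReal_rpow_of_pos (by exact_mod_cast hR),
    ENNReal.ofReal_coe_nnreal, ← mul_div_assoc, ENNReal.mul_div_right_comm,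
    ENNReal.mul_rpow_of_nonneg _ _ (by norm_num), ← ENNReal.rpow_mul,
    show 2 * c * (1 / 2) = c by ring]

lemma coneIntegral_Ioc_le (hσ : 0 < σ) (hg : Measurable g) (x : E) {R : ℝ≥0} (hR : 0 < R) :
    coneIntegral μ (Ioc 0 R) g x
      ≤ (coneIntegral μ (Ioi 0) (energyDensity σ g) x) ^ (1 / 2 : ℝ)
        * ((μ (ball 0 1) / ENNReal.ofReal (2 * σ)) ^ (1 / 2 : ℝ) * (R : ℝ≥0∞) ^ σ) := by
  have hR' : (0 : ℝ) < R := hR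
  have h_weight := lintegral_Ioc_rpow (b := 2 * σ) (by positivity) hR'
  rw [← neg_sub] at h_weight
  rw [← rpow_half_mul_ofReal_rpow_div _ (by positivity) hR, ← h_weight]
  refine (coneIntegral_le_rpow_mul_rpow hg measurableSet_Ioc Ioc_subset_Ioi_self
    (1 - 2 * σ) x).trans ?_
  gcongr
  exact coneIntegral_mono_set Ioc_subset_Ioi_self x

lemma coneIntegral_Ioi_le (hσ : 2 * σ < Module.finrank ℝ E) (hg : Measurable g) (x : E)
    {R : ℝ≥0} (hR : 0 < R) :
    coneIntegral μ (Ioi R) g x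
      ≤ halfSpaceEnergy μ σ g ^ (1 / 2 : ℝ)
        * ((μ (ball 0 1) / ENNReal.ofReal (Module.finrank ℝ E - 2 * σ)) ^ (1 / 2 : ℝ)
          * (R : ℝ≥0∞) ^ (-(Module.finrank ℝ E / 2 - σ))) := by
  set d := Module.finrank ℝ E
  have hR' : (0 : ℝ) < R := hR
  have hT : Ioi (R : ℝ) ⊆ Ioi 0 := Ioi_subset_Ioi hR'.le
  have hdσ : (0 : ℝ) < d - 2 * σ := by linarith
  have h_weight := lintegral_Ioi_rpow hdσ hR'
  rw [show -(d - 2 * σ) - 1 = -(1 - 2 * σ + d) by ring,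
    show -(d - 2 * σ) = 2 * -(d / 2 - σ) by ring] at h_weight
  have h_energy :
      coneIntegral μ (Ioi R) (fun p ↦ ENNReal.ofReal (p.2 ^ (1 - 2 * σ + d)) * g p ^ 2) x
        ≤ halfSpaceEnergy μ σ g := by
    calc _ = coneIntegral μ (Ioi R) (fun p ↦ ENNReal.ofReal (p.2 ^ d) * energyDensity σ g p) x := by
          refine setLIntegral_congr_fun (measurableSet_ball.prod measurableSet_Ioi) fun z hz ↦ ?_
          have hz0 : 0 < z.2 := hT hz.2
          simp only [energyDensity]
          rw [add_comm, Real.rpow_add hz0, Real.rpow_natCast, ENNReal.ofReal_mul (by positivity),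
            mul_assoc]
      _ ≤ ∫⁻ p in univ ×ˢ Ioi (R : ℝ), energyDensity σ g p ∂μ.prod volume :=
          coneIntegral_rpow_finrank_mul_le (measurable_energyDensity hg) measurableSet_Ioi hT x
      _ ≤ halfSpaceEnergy μ σ g := lintegral_mono_set (prod_mono_right hT)
  rw [← rpow_half_mul_ofReal_rpow_div _ hdσ hR, ← h_weight]
  exact (coneIntegral_le_rpow_mul_rpow hg measurableSet_Ioi hT _ x).trans (by gcongr)

end ConeIntegral

section Hedberg

variable {E : Type*} [NormedAddCommGroup E] [NormedSpace ℝ E] [MeasurableSpace E]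
  [BorelSpace E] [FiniteDimensional ℝ E] {μ : Measure E} [μ.IsAddHaarMeasure]
  {g : E × ℝ → ℝ≥0∞} {σ : ℝ}

lemma qc_pos {n : ℕ} (hσ : 0 < σ) (hn : 2 * σ < n) : 0 < qc n σ :=
  div_pos (by linarith) (by linarith)

lemma two_le_qc {n : ℕ} (hσ : 0 ≤ σ) (hn : 2 * σ < n) : 2 ≤ qc n σ := by
  rw [qc, le_div_iff₀ (by linarith)]
  linarith

/-- The constant produced by `coneIntegral_Ioi_zero_le` after raising it to the power `qc`; it
depends only on `σ`, the dimension and the normalisation of `μ`. -/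
def hedbergConst (μ : Measure E) (σ : ℝ) : ℝ≥0∞ :=
  2 ^ qc (Module.finrank ℝ E) σ * (μ (ball 0 1) / ENNReal.ofReal (2 * σ))
    * (μ (ball 0 1) / ENNReal.ofReal (Module.finrank ℝ E - 2 * σ))
      ^ (qc (Module.finrank ℝ E) σ / 2 - 1)

omit [BorelSpace E] in
lemma hedbergConst_ne_top (hσ : 0 < σ) (hd : 2 * σ < Module.finrank ℝ E) :
    hedbergConst μ σ ≠ ∞ := by
  have hball : μ (ball 0 1) ≠ ∞ := measure_ball_lt_top.ne
  refine ENNReal.mul_ne_top (ENNReal.mul_ne_top ?_ ?_) (ENNReal.rpow_ne_top_of_nonneg ?_ ?_)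
  · exact ENNReal.rpow_ne_top_of_nonneg (qc_pos hσ hd).le ENNReal.ofNat_ne_top
  · exact ENNReal.div_ne_top hball (by simpa using hσ)
  · linarith [two_le_qc hσ.le hd]
  · exact ENNReal.div_ne_top hball (by simpa using hd)

/-- Hedberg's argument: cut the cone at height `R` and optimise in `R`. -/
lemma coneIntegral_Ioi_zero_le (hσ : 0 < σ) (hd : 2 * σ < Module.finrank ℝ E) (hg : Measurable g)
    {x : E} (hS : coneIntegral μ (Ioi 0) (energyDensity σ g) x ≠ ∞)
    (hE : halfSpaceEnergy μ σ g ≠ ∞) :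
    coneIntegral μ (Ioi 0) g x
      ≤ 2 * ((μ (ball 0 1) / ENNReal.ofReal (2 * σ)
          * coneIntegral μ (Ioi 0) (energyDensity σ g) x) ^ (qc (Module.finrank ℝ E) σ)⁻¹
        * (μ (ball 0 1) / ENNReal.ofReal (Module.finrank ℝ E - 2 * σ)
          * halfSpaceEnergy μ σ g) ^ (1 / 2 - (qc (Module.finrank ℝ E) σ)⁻¹)) := by
  set d := Module.finrank ℝ E
  set S := coneIntegral μ (Ioi 0) (energyDensity σ g) x
  have hdσ : (0 : ℝ) < d - 2 * σ := by linarith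
  have hball : μ (ball 0 1) ≠ ∞ := measure_ball_lt_top.ne
  have h_split : ∀ R : ℝ≥0, 0 < R → coneIntegral μ (Ioi 0) g x
      ≤ (μ (ball 0 1) / ENNReal.ofReal (2 * σ) * S) ^ (1 / 2 : ℝ) * (R : ℝ≥0∞) ^ σ
        + (μ (ball 0 1) / ENNReal.ofReal (d - 2 * σ) * halfSpaceEnergy μ σ g) ^ (1 / 2 : ℝ)
          * (R : ℝ≥0∞) ^ (-(d / 2 - σ)) := fun R hR ↦ by
    rw [← Ioc_union_Ioi_eq_Ioi R.coe_nonneg]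
    refine (coneIntegral_union_le _ x).trans ?_
    rw [ENNReal.mul_rpow_of_nonneg _ _ (by norm_num), ENNReal.mul_rpow_of_nonneg _ _ (by norm_num),
      mul_comm _ (S ^ _), mul_comm _ (halfSpaceEnergy μ σ g ^ _), mul_assoc, mul_assoc]
    exact add_le_add (coneIntegral_Ioc_le hσ hg x hR) (coneIntegral_Ioi_le hd hg x hR)
  have h_interp := ennreal_le_two_mul_rpow_mul_rpow
    (ENNReal.rpow_ne_top_of_nonneg (by norm_num) (ENNReal.mul_ne_top
      (ENNReal.div_ne_top hball (by simpa using hσ)) hS))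
    (ENNReal.rpow_ne_top_of_nonneg (by norm_num) (ENNReal.mul_ne_top
      (ENNReal.div_ne_top hball (by simpa using hdσ)) hE))
    hσ (by linarith) h_split
  have hd0 : (d : ℝ) ≠ 0 := by linarith
  have h_local_exp : 1 / 2 * ((d / 2 - σ) / (σ + (d / 2 - σ))) = (qc d σ)⁻¹ := by
    rw [qc]
    field_simp
    ring
  have h_total_exp : 1 / 2 * (σ / (σ + (d / 2 - σ))) = 1 / 2 - (qc d σ)⁻¹ := by
    rw [qc]
    field_simp
    ring
  rwa [← ENNReal.rpow_mul, ← ENNReal.rpow_mul, h_local_exp, h_total_exp] at h_interp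

omit [BorelSpace E] in
lemma hedbergConst_ne_zero (hd : 2 * σ < Module.finrank ℝ E) : hedbergConst μ σ ≠ 0 := by
  have hball : μ (ball 0 1) ≠ 0 := (measure_ball_pos μ 0 one_pos).ne'
  have hball_top : μ (ball 0 1) ≠ ∞ := measure_ball_lt_top.ne
  have h_far : 0 < μ (ball 0 1) / ENNReal.ofReal (Module.finrank ℝ E - 2 * σ) :=
    ENNReal.div_pos hball ENNReal.ofReal_ne_top
  refine mul_ne_zero (mul_ne_zero ?_ ?_) (ENNReal.rpow_pos h_far ?_).ne'
  · exact (ENNReal.rpow_pos two_pos ENNReal.ofNat_ne_top).ne'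
  · exact (ENNReal.div_pos hball ENNReal.ofReal_ne_top).ne'
  · exact ENNReal.div_ne_top hball_top (by simpa using hd)

lemma coneIntegral_Ioi_zero_rpow_le (hσ : 0 < σ) (hd : 2 * σ < Module.finrank ℝ E)
    (hg : Measurable g) {x : E} (hS : coneIntegral μ (Ioi 0) (energyDensity σ g) x ≠ ∞)
    (hE : halfSpaceEnergy μ σ g ≠ ∞) :
    coneIntegral μ (Ioi 0) g x ^ qc (Module.finrank ℝ E) σ
      ≤ hedbergConst μ σ * halfSpaceEnergy μ σ g ^ (qc (Module.finrank ℝ E) σ / 2 - 1)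
        * coneIntegral μ (Ioi 0) (energyDensity σ g) x := by
  set q := qc (Module.finrank ℝ E) σ
  have hq0 : 0 < q := qc_pos hσ hd
  have hexp : (1 / 2 - q⁻¹) * q = q / 2 - 1 := by field_simp
  have hexp0 : 0 ≤ q / 2 - 1 := by linarith [two_le_qc hσ.le hd]
  refine (ENNReal.rpow_le_rpow (coneIntegral_Ioi_zero_le hσ hd hg hS hE) hq0.le).trans_eq ?_
  rw [ENNReal.mul_rpow_of_nonneg _ _ hq0.le, ENNReal.mul_rpow_of_nonneg _ _ hq0.le,
    ENNReal.rpow_inv_rpow hq0.ne', ← ENNReal.rpow_mul, hexp, ENNReal.mul_rpow_of_nonneg _ _ hexp0,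
    hedbergConst]
  ring

lemma lintegral_coneIntegral_rpow_le (hσ : 0 < σ) (hd : 2 * σ < Module.finrank ℝ E)
    (hg : Measurable g) :
    ∫⁻ x, coneIntegral μ (Ioi 0) g x ^ qc (Module.finrank ℝ E) σ ∂μ
      ≤ hedbergConst μ σ * μ (ball 0 1)
        * halfSpaceEnergy μ σ g ^ (qc (Module.finrank ℝ E) σ / 2) := by
  set q := qc (Module.finrank ℝ E) σ
  rcases eq_or_ne (halfSpaceEnergy μ σ g) ∞ with hE | hE
  · have hball : μ (ball 0 1) ≠ 0 := (measure_ball_pos μ 0 one_pos).ne'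
    rw [hE, ENNReal.top_rpow_of_pos (half_pos (qc_pos hσ hd)),
      ENNReal.mul_top (mul_ne_zero (hedbergConst_ne_zero hd) hball)]
    exact le_top
  have hexp0 : 0 ≤ q / 2 - 1 := by linarith [two_le_qc hσ.le hd]
  have hρ := measurable_energyDensity (σ := σ) hg
  have h_total : ∫⁻ x, coneIntegral μ (Ioi 0) (energyDensity σ g) x ∂μ
      = μ (ball 0 1) * halfSpaceEnergy μ σ g := lintegral_coneIntegral hρ
  have h_finite : ∀ᵐ x ∂μ, coneIntegral μ (Ioi 0) (energyDensity σ g) x < ∞ :=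
    ae_lt_top (measurable_coneIntegral hρ)
      (h_total ▸ ENNReal.mul_ne_top measure_ball_lt_top.ne hE)
  calc ∫⁻ x, coneIntegral μ (Ioi 0) g x ^ q ∂μ
      ≤ ∫⁻ x, hedbergConst μ σ * halfSpaceEnergy μ σ g ^ (q / 2 - 1)
          * coneIntegral μ (Ioi 0) (energyDensity σ g) x ∂μ :=
        lintegral_mono_ae (h_finite.mono fun x hx ↦
          coneIntegral_Ioi_zero_rpow_le hσ hd hg hx.ne hE)
    _ = hedbergConst μ σ * halfSpaceEnergy μ σ g ^ (q / 2 - 1)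
          * (μ (ball 0 1) * halfSpaceEnergy μ σ g) := by
        rw [lintegral_const_mul _ (measurable_coneIntegral hρ), h_total]
    _ = hedbergConst μ σ * μ (ball 0 1)
          * (halfSpaceEnergy μ σ g ^ (q / 2 - 1) * halfSpaceEnergy μ σ g ^ (1 : ℝ)) := by
        rw [ENNReal.rpow_one]
        ring
    _ = hedbergConst μ σ * μ (ball 0 1) * halfSpaceEnergy μ σ g ^ (q / 2) := by
        rw [← ENNReal.rpow_add_of_nonneg _ _ hexp0 zero_le_one, sub_add_cancel]

end Hedberg

section ConeCondition

variable {E F V : Type*} [NormedAddCommGroup E] [NormedSpace ℝ E]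
  [NormedAddCommGroup F] [NormedSpace ℝ F] [NormedAddCommGroup V] [NormedSpace ℝ V]

lemma enorm_le_lintegral_fderiv_ray {U : V → F} (hU : ContDiff ℝ 1 U) (hc : HasCompactSupport U)
    (p : V) {w : V} (hw : w ≠ 0) :
    ‖U p‖ₑ ≤ ∫⁻ t in Ioi (0 : ℝ), ‖fderiv ℝ U (p + t • w)‖ₑ * ‖w‖ₑ := by
  have h_ray : Topology.IsClosedEmbedding fun t : ℝ ↦ p + -t • w :=
    (Homeomorph.addLeft p).isClosedEmbedding.comp
      ((isClosedEmbedding_smul_left hw).comp (Homeomorph.neg ℝ).isClosedEmbedding)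
  have h_deriv : ∀ t : ℝ, deriv (fun t : ℝ ↦ U (p + -t • w)) t = -fderiv ℝ U (p + -t • w) w := by
    intro t
    have h_line : HasDerivAt (fun t : ℝ ↦ p + -t • w) (-w) t := by
      simpa using ((hasDerivAt_neg t).smul_const w).const_add p
    rw [← map_neg]
    exact ((hU.differentiable one_ne_zero _).hasFDerivAt.comp_hasDerivAt t h_line).deriv
  calc ‖U p‖ₑ = ‖U (p + -(0 : ℝ) • w)‖ₑ := by simp
    _ ≤ ∫⁻ t in Iic (0 : ℝ), ‖deriv (fun t : ℝ ↦ U (p + -t • w)) t‖ₑ :=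
        HasCompactSupport.enorm_le_lintegral_Ici_deriv (by fun_prop)
          (hc.comp_isClosedEmbedding h_ray) 0
    _ ≤ ∫⁻ t in Iic (0 : ℝ), ‖fderiv ℝ U (p + -t • w)‖ₑ * ‖w‖ₑ :=
        lintegral_mono fun t ↦ by
          rw [h_deriv, enorm_neg]
          exact ContinuousLinearMap.le_opENorm _ _
    _ = ∫⁻ t in Ioi (0 : ℝ), ‖fderiv ℝ U (p + t • w)‖ₑ * ‖w‖ₑ := by
        have h_reflect := (Measure.measurePreserving_neg (volume : Measure ℝ)
          ).setLIntegral_comp_preimage_emb (MeasurableEquiv.neg ℝ).measurableEmbedding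
          (fun t ↦ ‖fderiv ℝ U (p + t • w)‖ₑ * ‖w‖ₑ) (Ici 0)
        rw [setLIntegral_congr Ioi_ae_eq_Ici, ← h_reflect]
        simp

lemma enorm_le_lintegral_fderiv_slanted {U : E × ℝ → F} (hU : ContDiff ℝ 1 U)
    (hc : HasCompactSupport U) (x : E) {v : E} (hv : ‖v‖ ≤ 1) :
    ‖U (x, 0)‖ₑ ≤ ∫⁻ t in Ioi (0 : ℝ), ‖fderiv ℝ U (x + t • v, t)‖ₑ := by
  have h_norm : ‖(v, (1 : ℝ))‖ₑ = 1 := by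
    rw [← ofReal_norm, Prod.norm_mk, norm_one, max_eq_right hv, ENNReal.ofReal_one]
  have hw : (v, (1 : ℝ)) ≠ 0 := fun h ↦ one_ne_zero (congrArg Prod.snd h)
  simpa only [h_norm, mul_one, Prod.smul_mk, Prod.mk_add_mk, smul_eq_mul, zero_add]
    using enorm_le_lintegral_fderiv_ray hU hc (x, (0 : ℝ)) hw

/-- A uniform cone condition with infinite cones: for every point `x` of the flat boundary portion
`Γ`, the set `Ω` contains the cone of all rays from `(x, 0)` with direction `(v, 1)`, where `v` runs
through a ball of radius `ρ` inside the unit ball. -/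
def UniformConeCondition (ρ : ℝ) (Ω : Set (E × ℝ)) (Γ : Set E) : Prop :=
  ∀ x ∈ Γ, ∃ e : E, ball e ρ ⊆ ball 0 1 ∧ ∀ v ∈ ball e ρ, ∀ t : ℝ, 0 < t → (x + t • v, t) ∈ Ω

variable [MeasurableSpace E] [BorelSpace E] [FiniteDimensional ℝ E] {μ : Measure E}
  [μ.IsAddHaarMeasure] {ρ σ : ℝ} {Ω : Set (E × ℝ)} {Γ : Set E} {U : E × ℝ → F}

lemma UniformConeCondition.measure_ball_mul_enorm_le (hΩΓ : UniformConeCondition ρ Ω Γ)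
    (hΩ : MeasurableSet Ω) (hU : ContDiff ℝ 1 U) (hc : HasCompactSupport U) {x : E} (hx : x ∈ Γ) :
    μ (ball 0 ρ) * ‖U (x, 0)‖ₑ
      ≤ coneIntegral μ (Ioi 0) (Ω.indicator fun p ↦ ‖fderiv ℝ U p‖ₑ) x := by
  obtain ⟨e, he, hcone⟩ := hΩΓ x hx
  set g := Ω.indicator fun p ↦ ‖fderiv ℝ U p‖ₑ
  have hgm : Measurable g := (hU.continuous_fderiv one_ne_zero).enorm.measurable.indicator hΩ
  have h_ray : ∀ v ∈ ball e ρ, ‖U (x, 0)‖ₑ ≤ ∫⁻ t in Ioi (0 : ℝ), g (x + t • v, t) := by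
    intro v hv
    refine (enorm_le_lintegral_fderiv_slanted hU hc x (mem_ball_zero_iff.1 (he hv)).le).trans_eq ?_
    exact setLIntegral_congr_fun measurableSet_Ioi fun t ht ↦
      (indicator_of_mem (hcone v hv t ht) fun p ↦ ‖fderiv ℝ U p‖ₑ).symm
  calc μ (ball 0 ρ) * ‖U (x, 0)‖ₑ
      = ∫⁻ _ in ball e ρ, ‖U (x, 0)‖ₑ ∂μ := by
        rw [setLIntegral_const, Measure.addHaar_ball_center μ e, mul_comm]
    _ ≤ ∫⁻ v in ball e ρ, (∫⁻ t in Ioi (0 : ℝ), g (x + t • v, t)) ∂μ :=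
        setLIntegral_mono' measurableSet_ball h_ray
    _ ≤ ∫⁻ v in ball (0 : E) 1, (∫⁻ t in Ioi (0 : ℝ), g (x + t • v, t)) ∂μ := lintegral_mono_set he
    _ = coneIntegral μ (Ioi 0) g x :=
        (setLIntegral_prod (fun z ↦ g (x + z.2 • z.1, z.2)) (by fun_prop)).symm

theorem UniformConeCondition.lintegral_trace_rpow_le (hΩΓ : UniformConeCondition ρ Ω Γ)
    (hΩ : MeasurableSet Ω) (hσ : 0 < σ) (hd : 2 * σ < Module.finrank ℝ E) (hU : ContDiff ℝ 1 U)
    (hc : HasCompactSupport U) :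
    μ (ball 0 ρ) ^ qc (Module.finrank ℝ E) σ
        * ∫⁻ x in Γ, ‖U (x, 0)‖ₑ ^ qc (Module.finrank ℝ E) σ ∂μ
      ≤ hedbergConst μ σ * μ (ball 0 1)
        * (∫⁻ p in Ω, energyDensity σ (fun p ↦ ‖fderiv ℝ U p‖ₑ) p ∂μ.prod volume)
          ^ (qc (Module.finrank ℝ E) σ / 2) := by
  set q := qc (Module.finrank ℝ E) σ
  have hq : 0 < q := qc_pos hσ hd
  set g := Ω.indicator fun p ↦ ‖fderiv ℝ U p‖ₑ
  have hg : Measurable g := (hU.continuous_fderiv one_ne_zero).enorm.measurable.indicator hΩ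
  have h_trace : Measurable fun x : E ↦ ‖U (x, 0)‖ₑ ^ q :=
    (by fun_prop : Continuous fun x : E ↦ U (x, 0)).enorm.measurable.pow_const q
  calc μ (ball 0 ρ) ^ q * ∫⁻ x in Γ, ‖U (x, 0)‖ₑ ^ q ∂μ
      = ∫⁻ x in Γ, (μ (ball 0 ρ) * ‖U (x, 0)‖ₑ) ^ q ∂μ := by
        simp only [ENNReal.mul_rpow_of_nonneg _ _ hq.le, lintegral_const_mul _ h_trace]
    _ ≤ ∫⁻ x in Γ, coneIntegral μ (Ioi 0) g x ^ q ∂μ :=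
        setLIntegral_mono ((measurable_coneIntegral hg).pow_const q) fun x hx ↦
          ENNReal.rpow_le_rpow (hΩΓ.measure_ball_mul_enorm_le hΩ hU hc hx) hq.le
    _ ≤ ∫⁻ x, coneIntegral μ (Ioi 0) g x ^ q ∂μ := setLIntegral_le_lintegral _ _
    _ ≤ hedbergConst μ σ * μ (ball 0 1) * halfSpaceEnergy μ σ g ^ (q / 2) :=
        lintegral_coneIntegral_rpow_le hσ hd hg
    _ ≤ _ := by
        gcongr
        exact halfSpaceEnergy_indicator_le hΩ _

end ConeCondition

section ExteriorDomain

variable {H : Type*} [NormedAddCommGroup H] [InnerProductSpace ℝ H]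

lemma inner_nonneg_of_mem_ball_smul {w v : H} {r : ℝ}
    (hv : v ∈ ball ((r / ‖w‖) • w) r) : 0 ≤ inner ℝ w v := by
  have h_axis : inner ℝ w ((r / ‖w‖) • w) = r * ‖w‖ := by
    rcases eq_or_ne w 0 with rfl | hw
    · simp
    · rw [real_inner_smul_right, real_inner_self_eq_norm_sq]
      field_simp
  have h_dev : |inner ℝ w (v - (r / ‖w‖) • w)| ≤ r * ‖w‖ := by
    refine (abs_real_inner_le_norm _ _).trans ?_
    rw [mul_comm]
    gcongr
    exact (mem_ball_iff_norm.1 hv).le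
  rw [inner_sub_right, h_axis] at h_dev
  linarith [neg_le_of_abs_le h_dev]

lemma norm_le_norm_add_smul {w v : H} (h : 0 ≤ inner ℝ w v) {t : ℝ} (ht : 0 ≤ t) :
    ‖w‖ ≤ ‖w + t • v‖ := by
  refine (sq_le_sq₀ (norm_nonneg _) (norm_nonneg _)).1 ?_
  rw [norm_add_sq_real, real_inner_smul_right]
  have := mul_nonneg ht h
  linarith [sq_nonneg ‖t • v‖]

variable {n : ℕ} {z₁ z₂ : Ex n}

lemma norm_fst_le_pnorm (p : Fx n) : ‖p.1‖ ≤ pnorm p :=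
  Real.le_sqrt_of_sq_le (by linarith [sq_nonneg p.2])

lemma add_le_two_mul_pnorm (p : Fx n) : ‖p.1‖ + p.2 ≤ 2 * pnorm p := by
  have h_fst := norm_fst_le_pnorm p
  have h_snd : p.2 ≤ pnorm p := Real.le_sqrt_of_sq_le (by linarith [sq_nonneg ‖p.1‖])
  linarith

lemma one_le_pnorm_of_inner_nonneg {w v : Ex n} (hw : 1 ≤ ‖w‖) (h : 0 ≤ inner ℝ w v) {t : ℝ}
    (ht : 0 ≤ t) : 1 ≤ pnorm (w + t • v, t) :=
  calc 1 ≤ ‖w‖ := hw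
    _ ≤ ‖w + t • v‖ := norm_le_norm_add_smul h ht
    _ ≤ pnorm (w + t • v, t) := norm_fst_le_pnorm (w + t • v, t)

lemma one_le_pnorm_of_two_le_norm {w v : Ex n} (hw : 2 ≤ ‖w‖) (hv : ‖v‖ ≤ 1) {t : ℝ}
    (ht : 0 ≤ t) : 1 ≤ pnorm (w + t • v, t) := by
  have h_tilt : ‖t • v‖ ≤ t := by
    rw [norm_smul, Real.norm_of_nonneg ht]
    exact mul_le_of_le_one_right ht hv
  have h_tri : ‖w‖ ≤ ‖w + t • v‖ + ‖t • v‖ := norm_le_add_norm_add w (t • v)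
  have h_pnorm : ‖w + t • v‖ + t ≤ 2 * pnorm (w + t • v, t) :=
    add_le_two_mul_pnorm (w + t • v, t)
  linarith

lemma continuous_pnorm : Continuous (pnorm : Fx n → ℝ) := by
  unfold pnorm
  fun_prop

lemma measurableSet_extOmega (z₁ z₂ : Ex n) : MeasurableSet (extOmega n z₁ z₂) := by
  have h_dist (z : Ex n) : Continuous fun p : Fx n ↦ pnorm (p.1 - z, p.2) :=
    continuous_pnorm.comp (by fun_prop)
  exact (measurableSet_lt measurable_const measurable_snd).inter
    ((measurableSet_le measurable_const (h_dist z₁).measurable).inter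
      (measurableSet_le measurable_const (h_dist z₂).measurable))

/-- Lean the cone away from the nearer centre; the other one is too far to be met. -/
lemma uniformConeCondition_ext (hz : 4 ≤ dist z₁ z₂) :
    UniformConeCondition (1 / 2) (extOmega n z₁ z₂) (extFlat n z₁ z₂) := by
  have h_cone : ∀ {x a b : Ex n}, 1 ≤ ‖x - a‖ → 2 ≤ ‖x - b‖ → ∃ e : Ex n,
      ball e (1 / 2) ⊆ ball 0 1 ∧ ∀ v ∈ ball e (1 / 2), ∀ t : ℝ, 0 < t →
        1 ≤ pnorm (x + t • v - a, t) ∧ 1 ≤ pnorm (x + t • v - b, t) := by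
    intro x a b ha hb
    have h_sub : ball ((1 / 2 / ‖x - a‖) • (x - a)) (1 / 2) ⊆ ball 0 1 := by
      refine ball_subset_ball' ?_
      rw [dist_zero_right, norm_smul, norm_div, norm_norm, div_mul_cancel₀ _ (by positivity)]
      norm_num
    refine ⟨_, h_sub, fun v hv t ht ↦ ?_⟩
    rw [add_sub_right_comm, add_sub_right_comm]
    exact ⟨one_le_pnorm_of_inner_nonneg ha
        (inner_nonneg_of_mem_ball_smul hv) ht.le,
      one_le_pnorm_of_two_le_norm hb (mem_ball_zero_iff.1 (h_sub hv)).le ht.le⟩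
  rintro x ⟨hx₁, hx₂⟩
  have h_tri := dist_triangle_left z₁ z₂ x
  rw [dist_eq_norm x, dist_eq_norm x] at h_tri
  rcases le_total 2 ‖x - z₂‖ with h_far | h_near
  · obtain ⟨e, he, h⟩ := h_cone hx₁.le h_far
    exact ⟨e, he, fun v hv t ht ↦ ⟨ht, h v hv t ht⟩⟩
  · obtain ⟨e, he, h⟩ := h_cone hx₂.le (by linarith : 2 ≤ ‖x - z₁‖)
    exact ⟨e, he, fun v hv t ht ↦ ⟨ht, (h v hv t ht).symm⟩⟩

end ExteriorDomain

section Gradient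

variable {n : ℕ} {σ : ℝ} {U : Fx n → ℝ}

lemma gradSq_nonneg (U : Fx n → ℝ) (p : Fx n) : 0 ≤ gradSq U p := by
  unfold gradSq
  positivity

lemma continuous_gradSq (hU : ContDiff ℝ 1 U) : Continuous (gradSq U) := by
  have := hU.continuous_fderiv one_ne_zero
  unfold gradSq
  fun_prop

lemma hasCompactSupport_gradSq (hc : HasCompactSupport U) : HasCompactSupport (gradSq U) :=
  (hc.fderiv ℝ).comp_left (g := fun L : Fx n →L[ℝ] ℝ ↦
    (∑ i, L (EuclideanSpace.single i 1, 0) ^ 2) + L (0, 1) ^ 2) (by simp)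

lemma apply_eq_sum_single_add (L : Fx n →L[ℝ] ℝ) (v : Ex n) (t : ℝ) :
    L (v, t) = ∑ i, v i * L (EuclideanSpace.single i 1, 0) + t * L (0, 1) := by
  have h_decomp : ((v, t) : Fx n)
      = ∑ i, v i • ((EuclideanSpace.single i 1, 0) : Fx n) + t • (0, 1) := by
    ext i <;> simp [Prod.fst_sum, Prod.snd_sum, Pi.single_apply]
  rw [h_decomp, map_add, map_sum]
  simp only [map_smul, smul_eq_mul]

/-- The factor `2` accounts for the product norm on `Fx n` being a maximum. -/
lemma norm_fderiv_sq_le (U : Fx n → ℝ) (p : Fx n) : ‖fderiv ℝ U p‖ ^ 2 ≤ 2 * gradSq U p := by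
  set L := fderiv ℝ U p
  have h_bound : ∀ q : Fx n, L q ^ 2 ≤ 2 * gradSq U p * ‖q‖ ^ 2 := by
    rintro ⟨v, t⟩
    have hv : ∑ i, v i ^ 2 ≤ ‖(v, t)‖ ^ 2 := by
      rw [← EuclideanSpace.real_norm_sq_eq]
      gcongr
      exact norm_fst_le (v, t)
    have ht : t ^ 2 ≤ ‖(v, t)‖ ^ 2 :=
      sq_le_sq.2 ((norm_snd_le (v, t)).trans (le_abs_self _))
    calc L (v, t) ^ 2
        ≤ 2 * ((∑ i, v i * L (EuclideanSpace.single i 1, 0)) ^ 2 + (t * L (0, 1)) ^ 2) := by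
          rw [apply_eq_sum_single_add]
          exact add_sq_le
      _ ≤ 2 * ((∑ i, v i ^ 2) * (∑ i, L (EuclideanSpace.single i 1, 0) ^ 2)
            + t ^ 2 * L (0, 1) ^ 2) := by
          rw [mul_pow t]
          gcongr
          exact Finset.sum_mul_sq_le_sq_mul_sq _ _ _
      _ ≤ 2 * (‖(v, t)‖ ^ 2 * (∑ i, L (EuclideanSpace.single i 1, 0) ^ 2)
            + ‖(v, t)‖ ^ 2 * L (0, 1) ^ 2) := by gcongr
      _ = 2 * gradSq U p * ‖(v, t)‖ ^ 2 := by
          unfold gradSq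
          ring
  have hG : 0 ≤ 2 * gradSq U p := mul_nonneg two_pos.le (gradSq_nonneg U p)
  have h_norm : ‖L‖ ≤ √(2 * gradSq U p) :=
    L.opNorm_le_bound (Real.sqrt_nonneg _) fun q ↦ by
      rw [← Real.sqrt_sq (norm_nonneg q), ← Real.sqrt_mul hG]
      exact Real.abs_le_sqrt (h_bound q)
  exact (Real.le_sqrt (norm_nonneg L) hG).1 h_norm

end Gradient

section WeightedIntegrability

lemma locallyIntegrable_comp_snd {X Y : Type*} [TopologicalSpace X] [TopologicalSpace Y]
    [MeasurableSpace X] [MeasurableSpace Y] {μ : Measure X} {ν : Measure Y}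
    [IsLocallyFiniteMeasure μ] [SFinite μ] [SFinite ν] {f : Y → ℝ} (hf : LocallyIntegrable f ν) :
    LocallyIntegrable (fun p : X × Y ↦ f p.2) (μ.prod ν) := by
  rintro ⟨x, y⟩
  obtain ⟨s, hs, hμs⟩ := μ.finiteAt_nhds x
  obtain ⟨t, ht, hft⟩ := hf y
  have : IsFiniteMeasure (μ.restrict s) := isFiniteMeasure_restrict.2 hμs.ne
  refine ⟨s ×ˢ t, prod_mem_nhds hs ht, ?_⟩
  rw [IntegrableOn, ← Measure.prod_restrict]
  exact Integrable.comp_snd hft _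

lemma locallyIntegrable_rpow {r : ℝ} (hr : -1 < r) : LocallyIntegrable fun t : ℝ ↦ t ^ r :=
  fun t ↦ ⟨Ioo (t - 1) (t + 1), Ioo_mem_nhds (by linarith) (by linarith),
    (intervalIntegrable_iff_integrableOn_Ioo_of_le (by linarith)).1
      (intervalIntegral.intervalIntegrable_rpow' hr)⟩

variable {n : ℕ} {σ : ℝ} {U : Fx n → ℝ}

lemma integrable_rpow_mul_gradSq (hσ : σ < 1) (hU : ContDiff ℝ 1 U) (hc : HasCompactSupport U) :
    Integrable fun p : Fx n ↦ p.2 ^ (1 - 2 * σ) * gradSq U p := by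
  have h_weight : LocallyIntegrable fun p : Fx n ↦ p.2 ^ (1 - 2 * σ) :=
    locallyIntegrable_comp_snd (locallyIntegrable_rpow (by linarith))
  exact h_weight.integrable_smul_right_of_hasCompactSupport (continuous_gradSq hU)
    (hasCompactSupport_gradSq hc)

lemma lintegral_energyDensity_fderiv_le (hσ : σ < 1) (hU : ContDiff ℝ 1 U)
    (hc : HasCompactSupport U) {Ω : Set (Fx n)} (hΩ : MeasurableSet Ω) (hΩ_sub : Ω ⊆ halfSpace n) :
    ∫⁻ p in Ω, energyDensity σ (fun p ↦ ‖fderiv ℝ U p‖ₑ) p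
      ≤ ENNReal.ofReal (2 * ∫ p in Ω, p.2 ^ (1 - 2 * σ) * gradSq U p) := by
  have h_nonneg : ∀ p ∈ Ω, 0 ≤ p.2 ^ (1 - 2 * σ) := fun p hp ↦
    Real.rpow_nonneg (hΩ_sub hp : 0 < p.2).le _
  calc ∫⁻ p in Ω, energyDensity σ (fun p ↦ ‖fderiv ℝ U p‖ₑ) p
      ≤ ∫⁻ p in Ω, ENNReal.ofReal (2 * (p.2 ^ (1 - 2 * σ) * gradSq U p)) := by
        refine setLIntegral_mono' hΩ fun p hp ↦ ?_
        rw [energyDensity, ← ofReal_norm, ← ENNReal.ofReal_pow (norm_nonneg _),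
          ← ENNReal.ofReal_mul (h_nonneg p hp), mul_left_comm]
        have := h_nonneg p hp
        gcongr
        exact norm_fderiv_sq_le U p
    _ = ENNReal.ofReal (∫ p in Ω, 2 * (p.2 ^ (1 - 2 * σ) * gradSq U p)) :=
        (ofReal_integral_eq_lintegral_ofReal
          ((integrable_rpow_mul_gradSq hσ hU hc).integrableOn.const_mul 2)
          ((ae_restrict_mem hΩ).mono fun p hp ↦
            mul_nonneg two_pos.le (mul_nonneg (h_nonneg p hp) (gradSq_nonneg U p)))).symm
    _ = ENNReal.ofReal (2 * ∫ p in Ω, p.2 ^ (1 - 2 * σ) * gradSq U p) := by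
        rw [integral_const_mul]

end WeightedIntegrability

section TraceInequality

lemma integral_norm_rpow_eq_toReal {X F : Type*} [MeasurableSpace X] [NormedAddCommGroup F]
    {μ : Measure X} {u : X → F} (hu : AEStronglyMeasurable u μ) {q : ℝ} (hq : 0 ≤ q) :
    ∫ x, ‖u x‖ ^ q ∂μ = (∫⁻ x, ‖u x‖ₑ ^ q ∂μ).toReal := by
  rw [integral_eq_lintegral_of_nonneg_ae (ae_of_all _ fun x ↦ by positivity)
    (hu.norm.aemeasurable.pow_const q).aestronglyMeasurable]
  simp only [← ENNReal.ofReal_rpow_of_nonneg (norm_nonneg _) hq, ofReal_norm]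

lemma toReal_rpow_inv_le_mul_sqrt {A b c : ℝ≥0∞} {q y : ℝ} (hb0 : b ≠ 0) (hb : b ≠ ∞)
    (hc : c ≠ ∞) (hq : 0 < q) (hy : 0 ≤ y) (h : b * A ≤ c * ENNReal.ofReal y ^ (q / 2)) :
    A.toReal ^ q⁻¹ ≤ (c / b).toReal ^ q⁻¹ * √y := by
  have hK : c / b ≠ ∞ := ENNReal.div_ne_top hc hb0
  have hA : A ≤ c / b * ENNReal.ofReal y ^ (q / 2) := by
    rwa [← ENNReal.mul_div_right_comm, ENNReal.le_div_iff_mul_le (Or.inl hb0) (Or.inl hb), mul_comm]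
  have hA_real : A.toReal ≤ (c / b).toReal * y ^ (q / 2) := by
    refine (ENNReal.toReal_mono (ENNReal.mul_ne_top hK
      (ENNReal.rpow_ne_top_of_nonneg (by positivity) ENNReal.ofReal_ne_top)) hA).trans_eq ?_
    rw [ENNReal.toReal_mul, ← ENNReal.toReal_rpow, ENNReal.toReal_ofReal hy]
  calc A.toReal ^ q⁻¹ ≤ ((c / b).toReal * y ^ (q / 2)) ^ q⁻¹ := by gcongr
    _ = (c / b).toReal ^ q⁻¹ * √y := by
        rw [Real.mul_rpow ENNReal.toReal_nonneg (by positivity), ← Real.rpow_mul hy,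
          show q / 2 * q⁻¹ = 1 / 2 by field_simp, ← Real.sqrt_eq_rpow]

theorem exists_trace_inequality_of_uniformConeCondition {n : ℕ} {σ ρ : ℝ} (hσ0 : 0 < σ)
    (hσ1 : σ < 1) (hn : 2 * σ < n) (hρ : 0 < ρ) :
    ∃ C : ℝ, 0 < C ∧ ∀ (Ω : Set (Fx n)) (Γ : Set (Ex n)), MeasurableSet Ω → Ω ⊆ halfSpace n →
      UniformConeCondition ρ Ω Γ → ∀ U : Fx n → ℝ, ContDiff ℝ 1 U → HasCompactSupport U →
        (∫ x in Γ, |U (x, 0)| ^ qc n σ) ^ (qc n σ)⁻¹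
          ≤ C * √(∫ p in Ω, p.2 ^ (1 - 2 * σ) * gradSq U p) := by
  have hd : 2 * σ < Module.finrank ℝ (Ex n) := by simpa using hn
  have hq : 0 < qc n σ := qc_pos hσ0 hn
  set b : ℝ≥0∞ := volume (ball (0 : Ex n) ρ) ^ qc n σ
  set c : ℝ≥0∞ := hedbergConst (volume : Measure (Ex n)) σ * volume (ball (0 : Ex n) 1)
  have hb0 : b ≠ 0 := (ENNReal.rpow_pos (measure_ball_pos _ _ hρ) measure_ball_lt_top.ne).ne'
  have hb : b ≠ ∞ := ENNReal.rpow_ne_top_of_nonneg hq.le measure_ball_lt_top.ne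
  have hc0 : c ≠ 0 := mul_ne_zero (hedbergConst_ne_zero hd) (measure_ball_pos _ _ one_pos).ne'
  have hc : c ≠ ∞ := ENNReal.mul_ne_top (hedbergConst_ne_top hσ0 hd) measure_ball_lt_top.ne
  have hK : 0 < (c / b).toReal :=
    ENNReal.toReal_pos (ENNReal.div_pos hc0 hb).ne' (ENNReal.div_ne_top hc hb0)
  refine ⟨(c / b).toReal ^ (qc n σ)⁻¹ * √2, by positivity,
    fun Ω Γ hΩ hΩ_sub hcone U hU hUc ↦ ?_⟩
  have h_energy : 0 ≤ ∫ p in Ω, p.2 ^ (1 - 2 * σ) * gradSq U p := setIntegral_nonneg hΩ fun p hp ↦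
    mul_nonneg (Real.rpow_nonneg (hΩ_sub hp : 0 < p.2).le _) (gradSq_nonneg U p)
  have h_trace := hcone.lintegral_trace_rpow_le (μ := volume) hΩ hσ0 hd hU hUc
  rw [finrank_euclideanSpace_fin] at h_trace
  simp only [← Real.norm_eq_abs]
  rw [integral_norm_rpow_eq_toReal (by fun_prop) hq.le, mul_assoc, ← Real.sqrt_mul two_pos.le]
  refine toReal_rpow_inv_le_mul_sqrt hb0 hb hc hq (by positivity) (h_trace.trans ?_)
  gcongr
  exact lintegral_energyDensity_fderiv_le hσ1 hU hUc hΩ hΩ_sub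

theorem exterior_trace_inequality_general (n : ℕ) (σ : ℝ) (hσ0 : 0 < σ) (hσ1 : σ < 1)
    (hn : 2 * σ < n) :
    ∃ C : ℝ, 0 < C ∧
      ∀ z₁ z₂ : Ex n, 4 ≤ dist z₁ z₂ →
        ∀ U : Fx n → ℝ, ContDiff ℝ 1 U → HasCompactSupport U →
          (∫ x in extFlat n z₁ z₂, |U (x, 0)| ^ qc n σ) ^ (qc n σ)⁻¹
            ≤ C * √(∫ p in extOmega n z₁ z₂, p.2 ^ (1 - 2 * σ) * gradSq U p) := by
  obtain ⟨C, hC, h⟩ :=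
    exists_trace_inequality_of_uniformConeCondition hσ0 hσ1 hn one_half_pos
  exact ⟨C, hC, fun z₁ z₂ hz ↦ h _ _ (measurableSet_extOmega z₁ z₂) (fun _ hp ↦ hp.1)
    (uniformConeCondition_ext hz)⟩

end TraceInequality

/-- Sobolev trace inequality on the exterior domain, with a constant depending only on `n, σ`
and in particular uniform in the centers `z₁, z₂` as long as `|z₁ - z₂| ≥ 10`. -/
theorem exterior_trace_inequality (n : ℕ) (σ : ℝ)
    (hn : 2 ≤ n) (hσ0 : 0 < σ) (hσ1 : σ < 1) :
    ∃ C : ℝ, 0 < C ∧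
      ∀ z₁ z₂ : Ex n, 10 ≤ dist z₁ z₂ →
        ∀ U : Fx n → ℝ, ContDiff ℝ (⊤ : ℕ∞) U → HasCompactSupport U →
          (∫ x in extFlat n z₁ z₂, |U (x, 0)| ^ qc n σ) ^ (qc n σ)⁻¹
            ≤ C * Real.sqrt (∫ p in extOmega n z₁ z₂, p.2 ^ (1 - 2*σ) * gradSq U p) := by
  have hn' : (2 : ℝ) ≤ n := by exact_mod_cast hn
  obtain ⟨C, hC, h⟩ := exterior_trace_inequality_general n σ hσ0 hσ1 (by linarith)
  exact ⟨C, hC, fun z₁ z₂ hz U hU ↦ h z₁ z₂ (by linarith) U (hU.of_le (mod_cast le_top))⟩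
end
end
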